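/- arXiv:2404.18671 — 3 statements merged into one kernel-verified Lean document; each statement's English description precedes it below -/
import Mathlib

section
/- Let n ≥ 3 and let G₁,…,G_{n²−1} be n×n complex Hermitian matrices with Tr(G_i) = 0 for all i and Tr(G_i G_j) = 2δ_{ij} for all i, j. For each k let D_k be the (n²−1)×(n²−1) real symmetric matrix with (D_k)_{ij} = (1/(n−2))·√(n(n−1)/2)·d_{ijk}, where d_{ijk} = (1/4)·Re Tr((G_iG_j + G_jG_i)G_k). Given a₀, b₀ ∈ ℝ and a, b ∈ ℝ^{n²−1}, set A = a₀I + ∑_k a_k G_k and B = b₀I + ∑_k b_k G_k, set O = a aᵀ + b bᵀ (an (n²−1)×(n²−1) real symmetric matrix), and T = (n−2)·∑_{k=1}^{n²−1} Tr(O D_k)·D_k − (n−1)·O. Let Ω^ext_n = {r ∈ ℝ^{n²−1} : ρ(r)² = ρ(r)} where ρ(r) = (1/n)(I + √(n(n−1)/2)·∑_k r_k G_k). Then the minimum over all n×n density matrices ρ of var_ρ(A) + var_ρ(B) equals (2/n)·[ −(1/(n−1))·Tr(T) + min_{r ∈ Ω^ext_n} ⟨r, T r⟩ ]; in particular both minima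 exist (are attained). -/
/-!
Adding multiples of the identity to `A` and `B` does not change variances, so both are taken
traceless, with coordinate vectors `a` and `b` in the basis `G`.  The argument has three parts.

* *Reduction to pure states.*  `ρ ↦ var_ρ(A) + var_ρ(B)` is concave (`variance_ge_of_pure`), and the
  spectral theorem writes a density matrix as a convex combination of rank-one projections.  A lower
  bound on trace-one projections is therefore a lower bound on all density matrices.
* *Bloch coordinates.*  By dimension count `1, G₁, …` is a basis of the complex matrices
  (`completeness`), so trace-one Hermitian matrices are exactly the `bloch G r` with `r` real
  (`exists_bloch`), and the trace-one projections are exactly those with `bloch G r ^ 2 = bloch G r`.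
* *The quadratic form.*  For any `r` the sum of variances is
  `(2/n) (Tr O + (n-2) ∑ₖ Tr(O Dₖ) rₖ - (n-1) ⟨r, O r⟩)`.  Pairing `ρ² = ρ` with `Gₖ` gives
  `⟨r, Dₖ r⟩ = rₖ` (`pure_coord`), which turns the linear term into a quadratic one and produces
  `⟨r, T r⟩`.  The Casimir identity `∑ᵢ Gᵢ² = 2(n - 1/n) I` (`casimir`) gives `Tr Dₖ = 0`,
  hence `Tr T = -(n-1) Tr O`.

Taking the trace of `ρ² = ρ` gives `|r| = 1`, so the set of pure Bloch vectors is compact and the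
minimum `m` of `⟨r, T r⟩` is attained on it.
-/

namespace BlochVariance

open Matrix ComplexOrder

variable {n : ℕ} {ι : Type*} [Fintype ι]

/-- The traceless matrix `∑ₖ xₖ Gₖ` with real coordinate vector `x`. -/
noncomputable def vec (G : ι → Matrix (Fin n) (Fin n) ℂ) (x : ι → ℝ) : Matrix (Fin n) (Fin n) ℂ :=
  ∑ k, (x k : ℂ) • G k

/-- The trace-one matrix `ρ(r) = (1/n)(I + √(n(n-1)/2) ∑ₖ rₖ Gₖ)` with Bloch vector `r`. -/
noncomputable def bloch (G : ι → Matrix (Fin n) (Fin n) ℂ) (r : ι → ℝ) :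
    Matrix (Fin n) (Fin n) ℂ :=
  ((1 : ℂ) / n) • ((1 : Matrix (Fin n) (Fin n) ℂ)
    + ((Real.sqrt ((n : ℝ) * ((n : ℝ) - 1) / 2) : ℝ) : ℂ) • ∑ k, (r k : ℂ) • G k)

/-- The complex number `Tr(X²ρ) - (Tr(Xρ))²`; it is real when `X` and `ρ` are Hermitian. -/
def variance (X ρ : Matrix (Fin n) (Fin n) ℂ) : ℂ :=
  (X ^ 2 * ρ).trace - ((X * ρ).trace) ^ 2

/-! ### Reduction to pure states -/

lemma trace_mul_im {X Y : Matrix (Fin n) (Fin n) ℂ} (hX : X.IsHermitian) (hY : Y.IsHermitian) :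
    (X * Y).trace.im = 0 := by
  have h : star (X * Y).trace = (X * Y).trace := by
    rw [← trace_conjTranspose, conjTranspose_mul, hX.eq, hY.eq, trace_mul_comm]
  exact Complex.conj_eq_iff_im.mp h

lemma variance_re {X ρ : Matrix (Fin n) (Fin n) ℂ} (hX : X.IsHermitian) (hρ : ρ.IsHermitian) :
    (variance X ρ).re = (X ^ 2 * ρ).trace.re - ((X * ρ).trace.re) ^ 2 := by
  simp [variance, pow_two, trace_mul_im hX hρ]

/-- A density matrix is a convex combination of trace-one Hermitian projections. -/
lemma exists_pure_decomp {ρ : Matrix (Fin n) (Fin n) ℂ} (hρ : ρ.PosSemidef) (h1 : ρ.trace = 1) :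
    ∃ (w : Fin n → ℝ) (P : Fin n → Matrix (Fin n) (Fin n) ℂ),
      (∀ i, 0 ≤ w i) ∧ ∑ i, w i = 1 ∧ ρ = ∑ i, (w i : ℂ) • P i ∧
      ∀ i, (P i).IsHermitian ∧ P i ^ 2 = P i ∧ (P i).trace = 1 := by
  have hH := hρ.isHermitian
  set U : Matrix (Fin n) (Fin n) ℂ := (hH.eigenvectorUnitary : Matrix (Fin n) (Fin n) ℂ) with hU
  have hUU : Uᴴ * U = 1 := by
    have := Unitary.coe_star_mul_self hH.eigenvectorUnitary
    simpa [star_eq_conjTranspose] using this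
  refine ⟨hH.eigenvalues, fun i => U * single i i 1 * Uᴴ, hρ.eigenvalues_nonneg, ?_, ?_, ?_⟩
  · have := hH.trace_eq_sum_eigenvalues
    rw [h1] at this
    have h2 : ((∑ i, hH.eigenvalues i : ℝ) : ℂ) = 1 := by rw [this]; push_cast; rfl
    exact_mod_cast h2
  · have h := hH.spectral_theorem
    have hd : diagonal (RCLike.ofReal ∘ hH.eigenvalues : Fin n → ℂ)
        = ∑ i, (hH.eigenvalues i : ℂ) • single i i (1 : ℂ) := by
      rw [← sum_single_eq_diagonal]
      refine Finset.sum_congr rfl fun i _ => ?_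
      simp
    calc ρ = U * diagonal (RCLike.ofReal ∘ hH.eigenvalues : Fin n → ℂ) * Uᴴ := by
            rw [← star_eq_conjTranspose]; exact h
      _ = _ := by
            rw [hd, Finset.mul_sum, Finset.sum_mul]
            simp only [mul_smul_comm, smul_mul_assoc]
  · intro i
    refine ⟨?_, ?_, ?_⟩
    · simp [IsHermitian, conjTranspose_mul, Matrix.mul_assoc]
    · calc (U * single i i 1 * Uᴴ) ^ 2 = U * single i i 1 * (Uᴴ * U) * single i i 1 * Uᴴ := by
            simp only [pow_two, Matrix.mul_assoc]
        _ = _ := by rw [hUU]; simp [Matrix.mul_assoc]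
    · change (U * single i i 1 * Uᴴ).trace = 1
      rw [trace_mul_comm, ← Matrix.mul_assoc, hUU]
      simp

/-- Concavity of the variance in the state, for one observable. -/
lemma variance_concave {X : Matrix (Fin n) (Fin n) ℂ} (hX : X.IsHermitian)
    {w : Fin n → ℝ} {P : Fin n → Matrix (Fin n) (Fin n) ℂ} (hw : ∀ i, 0 ≤ w i)
    (hw1 : ∑ i, w i = 1) (hP : ∀ i, (P i).IsHermitian) :
    ∑ i, w i * (variance X (P i)).re ≤ (variance X (∑ i, (w i : ℂ) • P i)).re := by
  have hS : (∑ i, (w i : ℂ) • P i).IsHermitian := by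
    simp only [IsHermitian, conjTranspose_sum, conjTranspose_smul, (hP _).eq]
    simp
  have key : ∀ Y : Matrix (Fin n) (Fin n) ℂ,
      (Y * ∑ i, (w i : ℂ) • P i).trace.re = ∑ i, w i * (Y * P i).trace.re := by
    intro Y
    simp [Finset.mul_sum, trace_sum]
  rw [variance_re hX hS, key, key]
  simp only [variance_re hX (hP _), mul_sub, Finset.sum_sub_distrib]
  -- Jensen's inequality for the square.
  have := Real.pow_arith_mean_le_arith_mean_pow_of_even Finset.univ w
    (fun i => (X * P i).trace.re) (fun i _ => hw i) hw1 (n := 2) even_two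
  linarith

lemma variance_ge_of_pure {A B : Matrix (Fin n) (Fin n) ℂ} (hA : A.IsHermitian)
    (hB : B.IsHermitian) {m : ℝ}
    (hm : ∀ P : Matrix (Fin n) (Fin n) ℂ, P.IsHermitian → P ^ 2 = P → P.trace = 1 →
      m ≤ (variance A P + variance B P).re)
    {ρ : Matrix (Fin n) (Fin n) ℂ} (hρ : ρ.PosSemidef) (h1 : ρ.trace = 1) :
    m ≤ (variance A ρ + variance B ρ).re := by
  obtain ⟨w, P, hw, hw1, rfl, hP⟩ := exists_pure_decomp hρ h1
  have hA' := variance_concave hA hw hw1 fun i => (hP i).1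
  have hB' := variance_concave hB hw hw1 fun i => (hP i).1
  have : ∑ i, w i * m ≤ ∑ i, w i * (variance A (P i) + variance B (P i)).re :=
    Finset.sum_le_sum fun i _ =>
      mul_le_mul_of_nonneg_left (hm _ (hP i).1 (hP i).2.1 (hP i).2.2) (hw i)
  rw [← Finset.sum_mul, hw1, one_mul] at this
  simp only [Complex.add_re, mul_add, Finset.sum_add_distrib] at this ⊢
  linarith

/-- Adding a multiple of the identity does not change the variance. -/
lemma variance_shift (t : ℂ) (X ρ : Matrix (Fin n) (Fin n) ℂ) (h1 : ρ.trace = 1) :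
    variance (t • 1 + X) ρ = variance X ρ := by
  have e : (t • 1 + X) ^ 2 * ρ = (t ^ 2) • ρ + (2 * t) • (X * ρ) + X ^ 2 * ρ := by
    have : (t • (1 : Matrix (Fin n) (Fin n) ℂ) + X) ^ 2 = (t ^ 2) • 1 + (2 * t) • X + X ^ 2 := by
      simp only [pow_two, add_mul, mul_add, smul_mul_assoc, mul_smul_comm, one_mul, mul_one]
      module
    rw [this]
    simp [add_mul]
  rw [variance, variance, e]
  simp only [add_mul, smul_mul_assoc, one_mul, trace_add, trace_smul, h1, smul_eq_mul]
  ring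

/-! ### Bloch coordinates -/

section Basis

variable {G : ι → Matrix (Fin n) (Fin n) ℂ}

/-- Expansion of a matrix in the orthogonal basis `1, G₁, …`, obtained from linear independence
and a dimension count. -/
lemma completeness [DecidableEq ι] (hn : 0 < n) (hcard : Fintype.card ι + 1 = n ^ 2)
    (htr : ∀ i, (G i).trace = 0)
    (horth : ∀ i j, (G i * G j).trace = if i = j then 2 else 0)
    (X : Matrix (Fin n) (Fin n) ℂ) :
    X = (X.trace / n) • 1 + (1 / 2 : ℂ) • ∑ i, (G i * X).trace • G i := by
  have hn0 : (n : ℂ) ≠ 0 := by exact_mod_cast hn.ne'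
  let e : Option ι → Matrix (Fin n) (Fin n) ℂ := fun o => o.elim 1 G
  have hli : LinearIndependent ℂ e := by
    rw [Fintype.linearIndependent_iff]
    intro g hg
    have hpair : ∀ Y : Matrix (Fin n) (Fin n) ℂ, ∑ o, g o * (Y * e o).trace = 0 := by
      intro Y
      have := congrArg (fun Z => (Y * Z).trace) hg
      simpa only [Finset.mul_sum, trace_sum, mul_smul_comm, trace_smul, smul_eq_mul, mul_zero,
        trace_zero] using this
    rintro (_ | j)
    · have := hpair 1
      simpa [Fintype.sum_option, e, htr, hn0] using this
    · have := hpair (G j)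
      simpa [Fintype.sum_option, e, htr, horth] using this
  have hspan : Submodule.span ℂ (Set.range e) = ⊤ := by
    apply hli.span_eq_top_of_card_eq_finrank'
    rw [Fintype.card_option, hcard, Module.finrank_matrix]
    simp [pow_two]
  have hX : X ∈ Submodule.span ℂ (Set.range e) := by rw [hspan]; trivial
  induction hX using Submodule.span_induction with
  | mem x hx =>
    obtain ⟨_ | j, rfl⟩ := hx
    · simp [e, htr, hn0]
    · simp [e, htr, horth]
  | zero => simp
  | add x y _ _ hx hy =>
    nth_rewrite 1 [hx, hy]
    simp only [trace_add, mul_add, add_smul, add_div, Finset.sum_add_distrib, smul_add]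
    abel
  | smul t x _ hx =>
    nth_rewrite 1 [hx]
    simp only [trace_smul, mul_smul_comm, smul_add, smul_eq_mul, mul_div_assoc, mul_smul,
      ← Finset.smul_sum]
    rw [smul_comm t (1 / 2 : ℂ)]

/-- The Casimir identity: the quadratic sum of an orthogonal basis of the traceless matrices is
scalar. -/
lemma casimir [DecidableEq ι] (hn : 0 < n) (hcard : Fintype.card ι + 1 = n ^ 2)
    (htr : ∀ i, (G i).trace = 0)
    (horth : ∀ i j, (G i * G j).trace = if i = j then 2 else 0) :
    ∑ i, G i * G i = (2 * ((n : ℂ) - 1 / n)) • 1 := by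
  -- Completeness applied to matrix units gives the entries of `∑ᵢ Gᵢ ⊗ Gᵢ`.
  have hent : ∀ a b c d : Fin n, ∑ i, G i a b * G i c d
      = 2 * ((if a = d ∧ b = c then 1 else 0) - (if a = b ∧ c = d then 1 / (n : ℂ) else 0)) := by
    intro a b c d
    have h := congrFun (congrFun (completeness hn hcard htr horth (single b a (1 : ℂ))) c) d
    have ht : ∀ i, (G i * single b a (1 : ℂ)).trace = G i a b := by
      intro i; simp [trace_mul_single]
    have hs : (single b a (1 : ℂ)).trace = if a = b then 1 else 0 := by
      rcases eq_or_ne a b with rfl | hab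
      · simp
      · simp [hab, hab.symm]
    simp only [ht, hs, Matrix.add_apply, Matrix.smul_apply, Matrix.sum_apply, smul_eq_mul,
      single_apply, one_apply] at h
    have h' : ∑ i, G i a b * G i c d = 2 * ((if b = c ∧ a = d then 1 else 0)
        - (if a = b then 1 else 0) / (n : ℂ) * (if c = d then 1 else 0)) := by
      rw [h]; ring
    rw [h']
    by_cases h1 : a = b <;> by_cases h2 : c = d <;> simp [h1, h2, and_comm]
  ext a d
  simp only [Matrix.sum_apply, mul_apply]
  rw [Finset.sum_comm]
  simp only [hent, Matrix.smul_apply, one_apply, smul_eq_mul]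
  rcases eq_or_ne a d with rfl | had
  · have : ∀ x, (a = x ∧ x = a) ↔ a = x := fun x => ⟨fun h => h.1, fun h => ⟨h, h.symm⟩⟩
    simp [← Finset.mul_sum, Finset.sum_sub_distrib, this]
  · have : ∀ x, ¬ (a = x ∧ x = d) := fun x h => had (h.1.trans h.2)
    simp [had, this]

/-- For Hermitian factors the real part of a triple trace is symmetric; this is why `dᵢⱼₖ` equals
`(1/2) Re Tr(GᵢGⱼGₖ)`. -/
lemma re_trace_swap {X Y Z : Matrix (Fin n) (Fin n) ℂ} (hX : X.IsHermitian)
    (hY : Y.IsHermitian) (hZ : Z.IsHermitian) :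
    (X * Y * Z).trace.re = (Y * X * Z).trace.re := by
  have h : star (X * Y * Z).trace = (Y * X * Z).trace := by
    rw [← trace_conjTranspose, conjTranspose_mul, conjTranspose_mul, hX.eq, hY.eq, hZ.eq,
      trace_mul_comm]
  rw [← h]
  simp

lemma vec_isHermitian (hherm : ∀ i, (G i).IsHermitian) (x : ι → ℝ) :
    (vec G x).IsHermitian := by
  simp only [vec, IsHermitian, conjTranspose_sum, conjTranspose_smul, (hherm _).eq]
  simp

lemma trace_vec (htr : ∀ i, (G i).trace = 0) (x : ι → ℝ) : (vec G x).trace = 0 := by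
  simp [vec, trace_sum, htr]

lemma trace_mul_vec [DecidableEq ι] (horth : ∀ i j, (G i * G j).trace = if i = j then 2 else 0)
    (k : ι) (x : ι → ℝ) : (G k * vec G x).trace = 2 * x k := by
  simp [vec, Finset.mul_sum, trace_sum, horth, mul_comm]

lemma trace_vec_mul_vec [DecidableEq ι] (horth : ∀ i j, (G i * G j).trace = if i = j then 2 else 0)
    (x y : ι → ℝ) : (vec G x * vec G y).trace = ((2 * (x ⬝ᵥ y) : ℝ) : ℂ) := by
  rw [vec, Finset.sum_mul, trace_sum]
  simp only [smul_mul_assoc, trace_smul, trace_mul_vec horth, smul_eq_mul, dotProduct]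
  push_cast
  rw [Finset.mul_sum]
  exact Finset.sum_congr rfl fun i _ => by ring

lemma bloch_eq (r : ι → ℝ) : bloch G r = ((1 : ℂ) / n) • ((1 : Matrix (Fin n) (Fin n) ℂ)
    + ((Real.sqrt ((n : ℝ) * ((n : ℝ) - 1) / 2) : ℝ) : ℂ) • vec G r) := rfl

lemma bloch_isHermitian (hherm : ∀ i, (G i).IsHermitian) (r : ι → ℝ) :
    (bloch G r).IsHermitian := by
  rw [bloch_eq]
  simp only [IsHermitian, conjTranspose_smul, conjTranspose_add, conjTranspose_one,
    (vec_isHermitian hherm r).eq]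
  simp

lemma bloch_trace (hn : 0 < n) (htr : ∀ i, (G i).trace = 0) (r : ι → ℝ) :
    (bloch G r).trace = 1 := by
  have hn0 : (n : ℂ) ≠ 0 := by exact_mod_cast hn.ne'
  simp [bloch_eq, trace_vec htr, hn0]

/-- Every trace-one Hermitian matrix has a real Bloch vector. -/
lemma exists_bloch [DecidableEq ι] (hn : 2 ≤ n) (hcard : Fintype.card ι + 1 = n ^ 2)
    (hherm : ∀ i, (G i).IsHermitian) (htr : ∀ i, (G i).trace = 0)
    (horth : ∀ i j, (G i * G j).trace = if i = j then 2 else 0)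
    {P : Matrix (Fin n) (Fin n) ℂ} (hP : P.IsHermitian) (h1 : P.trace = 1) :
    ∃ r : ι → ℝ, P = bloch G r := by
  set c := Real.sqrt ((n : ℝ) * ((n : ℝ) - 1) / 2) with hc
  have hn2 : (2 : ℝ) ≤ n := by exact_mod_cast hn
  have hc0 : (c : ℂ) ≠ 0 := by
    have : 0 < c := Real.sqrt_pos.mpr (by nlinarith)
    exact_mod_cast this.ne'
  have hn0 : (n : ℂ) ≠ 0 := by exact_mod_cast (by omega : n ≠ 0)
  refine ⟨fun k => n / (2 * c) * (G k * P).trace.re, ?_⟩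
  have hre : ∀ k, (((G k * P).trace.re : ℝ) : ℂ) = (G k * P).trace := fun k =>
    Complex.ext (by simp) (by simp [trace_mul_im (hherm k) hP])
  nth_rewrite 1 [completeness (by omega) hcard htr horth P]
  rw [bloch, h1, smul_add, Finset.smul_sum, Finset.smul_sum, Finset.smul_sum]
  congr 1
  refine Finset.sum_congr rfl fun k _ => ?_
  push_cast
  rw [hre, smul_smul, smul_smul, smul_smul, ← hc]
  congr 1
  field_simp

/-- Pure states have unit Bloch vectors, by taking the trace of `ρ² = ρ`. -/
lemma pure_norm [DecidableEq ι] (hn : 2 ≤ n) (htr : ∀ i, (G i).trace = 0)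
    (horth : ∀ i j, (G i * G j).trace = if i = j then 2 else 0)
    {r : ι → ℝ} (hr : bloch G r ^ 2 = bloch G r) : r ⬝ᵥ r = 1 := by
  have hn2 : (2 : ℝ) ≤ n := by exact_mod_cast hn
  set c := Real.sqrt ((n : ℝ) * ((n : ℝ) - 1) / 2) with hc
  have hc2 : c ^ 2 = n * (n - 1) / 2 := Real.sq_sqrt (by nlinarith)
  have h := congrArg (fun Z => Z.trace.re) hr
  simp only [bloch_trace (by omega : 0 < n) htr] at h
  rw [bloch_eq, ← hc, pow_two] at h
  simp only [smul_mul_assoc, mul_smul_comm, trace_smul, add_mul, mul_add, trace_add,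
    trace_vec htr, trace_vec_mul_vec horth, one_mul, mul_one, smul_eq_mul, trace_one,
    Fintype.card_fin] at h
  have h' : ((1 / n * (1 / n * (n + c * (c * (2 * (r ⬝ᵥ r))))) : ℝ) : ℂ).re = 1 := by
    rw [Complex.one_re] at h
    refine Eq.trans ?_ h
    congr 1
    push_cast
    ring
  rw [Complex.ofReal_re] at h'
  have h3 : (n : ℝ) + 2 * c ^ 2 * (r ⬝ᵥ r) = n ^ 2 := by
    field_simp at h'
    linarith
  rw [hc2] at h3
  have : (n : ℝ) * (n - 1) * (r ⬝ᵥ r - 1) = 0 := by linarith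
  have hne : (n : ℝ) * (n - 1) ≠ 0 := by nlinarith
  have := (mul_eq_zero.mp this).resolve_left hne
  linarith

/-! ### The matrices `Dₖ` and the quadratic form -/

variable {D : ι → Matrix ι ι ℝ}

lemma D_apply {κ : Type*} {G : κ → Matrix (Fin n) (Fin n) ℂ} {D : κ → Matrix κ κ ℝ}
    (hn : 3 ≤ n) (hherm : ∀ i, (G i).IsHermitian)
    (hD : ∀ k i j, D k i j
      = (1 / ((n : ℝ) - 2)) * Real.sqrt ((n : ℝ) * ((n : ℝ) - 1) / 2)
          * ((1 / 4) * ((G i * G j + G j * G i) * G k).trace.re)) (k i j : κ) :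
    ((n : ℝ) - 2) * D k i j
      = Real.sqrt ((n : ℝ) * ((n : ℝ) - 1) / 2) / 2 * (G i * G j * G k).trace.re := by
  have hn3 : (3 : ℝ) ≤ n := by exact_mod_cast hn
  have h2 : (n : ℝ) - 2 ≠ 0 := by linarith
  rw [hD, add_mul, trace_add, Complex.add_re, re_trace_swap (hherm j) (hherm i) (hherm k)]
  field_simp
  ring

/-- The bilinear form of `Dₖ` in terms of traces of matrices. -/
lemma D_form (hn : 3 ≤ n) (hherm : ∀ i, (G i).IsHermitian)
    (hD : ∀ k i j, D k i j
      = (1 / ((n : ℝ) - 2)) * Real.sqrt ((n : ℝ) * ((n : ℝ) - 1) / 2)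
          * ((1 / 4) * ((G i * G j + G j * G i) * G k).trace.re)) (k : ι) (x y : ι → ℝ) :
    ((n : ℝ) - 2) * (x ⬝ᵥ (D k *ᵥ y))
      = Real.sqrt ((n : ℝ) * ((n : ℝ) - 1) / 2) / 2 * (vec G x * vec G y * G k).trace.re := by
  have e : (vec G x * vec G y * G k).trace.re
      = ∑ i, ∑ j, x i * (y j * (G i * G j * G k).trace.re) := by
    simp only [vec, Finset.sum_mul, Finset.mul_sum, trace_sum, smul_mul_assoc, mul_smul_comm,
      trace_smul, smul_eq_mul, Complex.re_sum, Complex.re_ofReal_mul]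
    rw [Finset.sum_comm]
    exact Finset.sum_congr rfl fun i _ => Finset.sum_congr rfl fun j _ => by ring
  rw [e]
  simp only [dotProduct, mulVec, Finset.mul_sum]
  refine Finset.sum_congr rfl fun i _ => Finset.sum_congr rfl fun j _ => ?_
  have := D_apply hn hherm hD k i j
  linear_combination (x i * y j) * this

lemma D_trace [DecidableEq ι] (hn : 3 ≤ n) (hcard : Fintype.card ι + 1 = n ^ 2)
    (hherm : ∀ i, (G i).IsHermitian) (htr : ∀ i, (G i).trace = 0)
    (horth : ∀ i j, (G i * G j).trace = if i = j then 2 else 0)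
    (hD : ∀ k i j, D k i j
      = (1 / ((n : ℝ) - 2)) * Real.sqrt ((n : ℝ) * ((n : ℝ) - 1) / 2)
          * ((1 / 4) * ((G i * G j + G j * G i) * G k).trace.re)) (k : ι) :
    (D k).trace = 0 := by
  have hn3 : (3 : ℝ) ≤ n := by exact_mod_cast hn
  have h2 : (n : ℝ) - 2 ≠ 0 := by linarith
  have h : ((n : ℝ) - 2) * (D k).trace = Real.sqrt ((n : ℝ) * ((n : ℝ) - 1) / 2) / 2
      * ((∑ i, G i * G i) * G k).trace.re := by
    simp only [trace, diag, Finset.mul_sum, D_apply hn hherm hD]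
    rw [← Finset.mul_sum]
    congr 1
    rw [← Complex.re_sum]
    congr 1
    change _ = (_ : Matrix (Fin n) (Fin n) ℂ).trace
    rw [Finset.sum_mul, trace_sum]
    rfl
  rw [casimir (by omega) hcard htr horth] at h
  simp only [smul_mul_assoc, one_mul, trace_smul, htr, smul_zero, Complex.zero_re, mul_zero] at h
  exact (mul_eq_zero.mp h).resolve_left h2

/-- The components along `Gₖ` of the purity equation `ρ² = ρ`. -/
lemma pure_coord [DecidableEq ι] (hn : 3 ≤ n) (hherm : ∀ i, (G i).IsHermitian)
    (htr : ∀ i, (G i).trace = 0)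
    (horth : ∀ i j, (G i * G j).trace = if i = j then 2 else 0)
    (hD : ∀ k i j, D k i j
      = (1 / ((n : ℝ) - 2)) * Real.sqrt ((n : ℝ) * ((n : ℝ) - 1) / 2)
          * ((1 / 4) * ((G i * G j + G j * G i) * G k).trace.re))
    {r : ι → ℝ} (hr : bloch G r ^ 2 = bloch G r) (k : ι) : r ⬝ᵥ (D k *ᵥ r) = r k := by
  have hn3 : (3 : ℝ) ≤ n := by exact_mod_cast hn
  have h2 : (n : ℝ) - 2 ≠ 0 := by linarith
  have hF := D_form hn hherm hD k r r
  set c := Real.sqrt ((n : ℝ) * ((n : ℝ) - 1) / 2) with hc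
  have hc0 : 0 < c := Real.sqrt_pos.mpr (by nlinarith)
  have hcm : (vec G r * G k).trace = ((2 * r k : ℝ) : ℂ) := by
    rw [trace_mul_comm, trace_mul_vec horth]; push_cast; rfl
  have h := congrArg (fun Z => (Z * G k).trace.re) hr
  rw [bloch_eq, ← hc, pow_two] at h
  have hq : ((1 : ℂ) / n) = ((1 / n : ℝ) : ℂ) := by push_cast; rfl
  simp only [hq, smul_mul_assoc, mul_smul_comm, trace_smul, add_mul, mul_add, trace_add, htr, hcm,
    one_mul, mul_one, smul_eq_mul, Complex.re_ofReal_mul, Complex.add_re, Complex.zero_re,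
    Complex.ofReal_re] at h
  field_simp at h
  have h3 : c * (vec G r * vec G r * G k).trace.re = 2 * ((n : ℝ) - 2) * r k := by
    nlinarith
  have : ((n : ℝ) - 2) * (r ⬝ᵥ (D k *ᵥ r)) = ((n : ℝ) - 2) * r k := by
    rw [hF]; linarith
  exact mul_left_cancel₀ h2 this

/-- The variance as a function of the Bloch vector, for any `r`, pure or not. -/
lemma variance_bloch [DecidableEq ι] (hn : 3 ≤ n) (hherm : ∀ i, (G i).IsHermitian)
    (horth : ∀ i j, (G i * G j).trace = if i = j then 2 else 0)
    (htr : ∀ i, (G i).trace = 0)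
    (hD : ∀ k i j, D k i j
      = (1 / ((n : ℝ) - 2)) * Real.sqrt ((n : ℝ) * ((n : ℝ) - 1) / 2)
          * ((1 / 4) * ((G i * G j + G j * G i) * G k).trace.re))
    (a r : ι → ℝ) :
    (variance (vec G a) (bloch G r)).re = 2 / n * (a ⬝ᵥ a
      + ((n : ℝ) - 2) * ∑ k, (a ⬝ᵥ (D k *ᵥ a)) * r k - ((n : ℝ) - 1) * (a ⬝ᵥ r) ^ 2) := by
  have hn3 : (3 : ℝ) ≤ n := by exact_mod_cast hn
  rw [variance_re (vec_isHermitian hherm a) (bloch_isHermitian hherm r)]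
  have hF := fun k => D_form hn hherm hD k a a
  rw [bloch_eq]
  set c := Real.sqrt ((n : ℝ) * ((n : ℝ) - 1) / 2) with hc
  have hc2 : c ^ 2 = n * (n - 1) / 2 := Real.sq_sqrt (by nlinarith)
  have hcub : c * (vec G a * vec G a * vec G r).trace.re
      = 2 * (((n : ℝ) - 2) * ∑ k, (a ⬝ᵥ (D k *ᵥ a)) * r k) := by
    nth_rewrite 3 [vec]
    simp only [Finset.mul_sum, trace_sum, mul_smul_comm, trace_smul, smul_eq_mul, Complex.re_sum,
      Complex.re_ofReal_mul]
    refine Finset.sum_congr rfl fun k _ => ?_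
    linear_combination (-2 * r k) * hF k
  have hq : ((1 : ℂ) / n) = ((1 / n : ℝ) : ℂ) := by push_cast; rfl
  simp only [hq, pow_two (vec G a), mul_smul_comm, trace_smul, mul_add, trace_add,
    trace_vec htr, trace_vec_mul_vec horth, mul_one, smul_eq_mul, Complex.re_ofReal_mul,
    Complex.add_re, Complex.zero_re, Complex.ofReal_re, hcub]
  have hsq : (1 / (n : ℝ) * 0 + 1 / (n : ℝ) * (c * (2 * (a ⬝ᵥ r)))) ^ 2
      = 2 / n * (((n : ℝ) - 1) * (a ⬝ᵥ r) ^ 2) := by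
    have : (1 / (n : ℝ) * 0 + 1 / (n : ℝ) * (c * (2 * (a ⬝ᵥ r)))) ^ 2
      = 1 / (n : ℝ) ^ 2 * (c ^ 2 * 4 * (a ⬝ᵥ r) ^ 2) := by ring
    rw [this, hc2]
    field_simp
    ring
  rw [hsq]
  ring

/-- On pure states the sum of the two variances is the quadratic form of `T`, up to constants. -/
lemma variance_pure [DecidableEq ι] (hn : 3 ≤ n) (hcard : Fintype.card ι + 1 = n ^ 2)
    (hherm : ∀ i, (G i).IsHermitian) (htr : ∀ i, (G i).trace = 0)
    (horth : ∀ i j, (G i * G j).trace = if i = j then 2 else 0)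
    (hD : ∀ k i j, D k i j
      = (1 / ((n : ℝ) - 2)) * Real.sqrt ((n : ℝ) * ((n : ℝ) - 1) / 2)
          * ((1 / 4) * ((G i * G j + G j * G i) * G k).trace.re))
    (a b : ι → ℝ) {O T : Matrix ι ι ℝ} (hO : ∀ i j, O i j = a i * a j + b i * b j)
    (hT : T = ((n : ℝ) - 2) • (∑ k, (O * D k).trace • D k) - ((n : ℝ) - 1) • O)
    {r : ι → ℝ} (hr : bloch G r ^ 2 = bloch G r) :
    (variance (vec G a) (bloch G r) + variance (vec G b) (bloch G r)).re
      = 2 / (n : ℝ) * (-(1 / ((n : ℝ) - 1)) * T.trace + r ⬝ᵥ (T *ᵥ r)) := by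
  have hn3 : (3 : ℝ) ≤ n := by exact_mod_cast hn
  have h1 : (n : ℝ) - 1 ≠ 0 := by linarith
  -- `O` enters only through its rank-one parts `a aᵀ` and `b bᵀ`.
  have hO' : O = vecMulVec a a + vecMulVec b b := by
    ext i j; simp [hO, vecMulVec_apply]
  have hOM : ∀ M : Matrix ι ι ℝ, (O * M).trace = a ⬝ᵥ (M *ᵥ a) + b ⬝ᵥ (M *ᵥ b) := by
    intro M
    have : ∀ x : ι → ℝ, (vecMulVec x x * M).trace = x ⬝ᵥ (M *ᵥ x) := by
      intro x
      rw [vecMulVec_mul, trace_vecMulVec, dotProduct_mulVec, dotProduct_comm]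
    rw [hO', add_mul, trace_add, this, this]
  have hOt : O.trace = a ⬝ᵥ a + b ⬝ᵥ b := by rw [hO']; simp
  have hOr : r ⬝ᵥ (O *ᵥ r) = (a ⬝ᵥ r) ^ 2 + (b ⬝ᵥ r) ^ 2 := by
    have : ∀ x : ι → ℝ, r ⬝ᵥ (vecMulVec x x *ᵥ r) = (x ⬝ᵥ r) ^ 2 := by
      intro x
      rw [vecMulVec_mulVec]
      simp [pow_two, dotProduct_comm r x]
    rw [hO', add_mulVec, dotProduct_add, this, this]
  have hTt : T.trace = -(((n : ℝ) - 1) * (a ⬝ᵥ a + b ⬝ᵥ b)) := by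
    rw [hT, trace_sub, trace_smul, trace_smul, trace_sum, hOt]
    simp [D_trace hn hcard hherm htr horth hD]
  have hTr : r ⬝ᵥ (T *ᵥ r) = ((n : ℝ) - 2) * ∑ k, (O * D k).trace * r k
      - ((n : ℝ) - 1) * ((a ⬝ᵥ r) ^ 2 + (b ⬝ᵥ r) ^ 2) := by
    rw [hT, sub_mulVec, smul_mulVec, smul_mulVec, dotProduct_sub, dotProduct_smul,
      dotProduct_smul, hOr, sum_mulVec, dotProduct_sum]
    simp [smul_mulVec, pure_coord hn hherm htr horth hD hr]
  rw [Complex.add_re, variance_bloch hn hherm horth htr hD, variance_bloch hn hherm horth htr hD,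
    hTt, hTr]
  simp only [hOM, add_mul, Finset.sum_add_distrib]
  field_simp
  ring

end Basis

end BlochVariance

/-! ### Minimum over density matrices -/

open Matrix ComplexOrder in
theorem stmt_7 (n : ℕ) (hn : 3 ≤ n)
    (G : Fin (n ^ 2 - 1) → Matrix (Fin n) (Fin n) ℂ)
    (hherm : ∀ i, (G i).IsHermitian)
    (htr : ∀ i, (G i).trace = 0)
    (horth : ∀ i j, (G i * G j).trace = if i = j then 2 else 0)
    (D : Fin (n ^ 2 - 1) → Matrix (Fin (n ^ 2 - 1)) (Fin (n ^ 2 - 1)) ℝ)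
    (hD : ∀ k i j, D k i j
      = (1 / ((n : ℝ) - 2)) * Real.sqrt ((n : ℝ) * ((n : ℝ) - 1) / 2)
          * ((1 / 4) * ((G i * G j + G j * G i) * G k).trace.re))
    (a₀ b₀ : ℝ) (a b : Fin (n ^ 2 - 1) → ℝ)
    (A B : Matrix (Fin n) (Fin n) ℂ)
    (hA : A = (a₀ : ℂ) • (1 : Matrix (Fin n) (Fin n) ℂ) + ∑ k, (a k : ℂ) • G k)
    (hB : B = (b₀ : ℂ) • (1 : Matrix (Fin n) (Fin n) ℂ) + ∑ k, (b k : ℂ) • G k)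
    (O : Matrix (Fin (n ^ 2 - 1)) (Fin (n ^ 2 - 1)) ℝ)
    (hO : ∀ i j, O i j = a i * a j + b i * b j)
    (T : Matrix (Fin (n ^ 2 - 1)) (Fin (n ^ 2 - 1)) ℝ)
    (hT : T = ((n : ℝ) - 2) • (∑ k, (O * D k).trace • D k) - ((n : ℝ) - 1) • O) :
    ∃ m : ℝ,
      IsLeast {x : ℝ | ∃ r : Fin (n ^ 2 - 1) → ℝ,
          (((1 : ℂ) / n) • ((1 : Matrix (Fin n) (Fin n) ℂ)
              + ((Real.sqrt ((n : ℝ) * ((n : ℝ) - 1) / 2) : ℝ) : ℂ)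
                  • ∑ k, (r k : ℂ) • G k)) ^ 2
            = ((1 : ℂ) / n) • ((1 : Matrix (Fin n) (Fin n) ℂ)
              + ((Real.sqrt ((n : ℝ) * ((n : ℝ) - 1) / 2) : ℝ) : ℂ)
                  • ∑ k, (r k : ℂ) • G k)
          ∧ x = r ⬝ᵥ (T *ᵥ r)} m
      ∧ IsLeast {x : ℝ | ∃ ρ : Matrix (Fin n) (Fin n) ℂ,
          ρ.PosSemidef ∧ ρ.trace = 1 ∧
          x = (((A ^ 2 * ρ).trace - ((A * ρ).trace) ^ 2)
                + ((B ^ 2 * ρ).trace - ((B * ρ).trace) ^ 2)).re}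
        ((2 / (n : ℝ)) * (-(1 / ((n : ℝ) - 1)) * T.trace + m)) := by
  have hcard : Fintype.card (Fin (n ^ 2 - 1)) + 1 = n ^ 2 := by
    have : 0 < n ^ 2 := by positivity
    rw [Fintype.card_fin]; omega
  have hA' : A.IsHermitian := by
    have h := BlochVariance.vec_isHermitian hherm a
    rw [hA]
    refine IsHermitian.add ?_ h
    simp [IsHermitian, conjTranspose_smul]
  have hB' : B.IsHermitian := by
    have h := BlochVariance.vec_isHermitian hherm b
    rw [hB]
    refine IsHermitian.add ?_ h
    simp [IsHermitian, conjTranspose_smul]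
  -- The set of pure Bloch vectors is nonempty, closed and bounded.
  let Ω : Set (Fin (n ^ 2 - 1) → ℝ) :=
    {r | BlochVariance.bloch G r ^ 2 = BlochVariance.bloch G r}
  have hcont : Continuous (BlochVariance.bloch G) := by
    unfold BlochVariance.bloch
    fun_prop
  have hclosed : IsClosed Ω := isClosed_eq (hcont.pow 2) hcont
  have hbdd : Ω ⊆ Metric.closedBall 0 1 := by
    intro r hr
    have h := BlochVariance.pure_norm (by omega : 2 ≤ n) htr horth hr
    rw [mem_closedBall_zero_iff, pi_norm_le_iff_of_nonneg zero_le_one]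
    intro i
    rw [Real.norm_eq_abs, ← sq_le_one_iff_abs_le_one, ← h, pow_two]
    exact Finset.single_le_sum (f := fun i => r i * r i) (fun j _ => mul_self_nonneg (r j))
      (Finset.mem_univ i)
  have hcomp : IsCompact Ω := (isCompact_closedBall _ _).of_isClosed_subset hclosed hbdd
  have hproj : ∀ P : Matrix (Fin n) (Fin n) ℂ, P.IsHermitian → P ^ 2 = P → P.trace = 1 →
      ∃ r ∈ Ω, P = BlochVariance.bloch G r := by
    intro P hP hP2 hP1
    obtain ⟨r, rfl⟩ := BlochVariance.exists_bloch (by omega : 2 ≤ n) hcard hherm htr horth hP hP1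
    exact ⟨r, hP2, rfl⟩
  have hne : Ω.Nonempty := by
    let i : Fin n := ⟨0, by omega⟩
    obtain ⟨r, hr, -⟩ := hproj (single i i 1) (by simp [IsHermitian]) (by simp [pow_two])
      (by simp)
    exact ⟨r, hr⟩
  obtain ⟨r₀, hr₀, hmin⟩ := hcomp.exists_isMinOn hne
    (f := fun r => r ⬝ᵥ (T *ᵥ r)) (by fun_prop)
  have hval : ∀ r ∈ Ω, (BlochVariance.variance A (BlochVariance.bloch G r)
      + BlochVariance.variance B (BlochVariance.bloch G r)).re
      = 2 / (n : ℝ) * (-(1 / ((n : ℝ) - 1)) * T.trace + r ⬝ᵥ (T *ᵥ r)) := by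
    intro r hr
    have h1 := BlochVariance.bloch_trace (by omega : 0 < n) htr r
    rw [← BlochVariance.variance_pure hn hcard hherm htr horth hD a b hO hT hr, hA, hB,
      BlochVariance.variance_shift _ _ _ h1, BlochVariance.variance_shift _ _ _ h1]
    rfl
  refine ⟨r₀ ⬝ᵥ (T *ᵥ r₀), ⟨⟨r₀, hr₀, rfl⟩, ?_⟩, ⟨BlochVariance.bloch G r₀, ?_, ?_, ?_⟩, ?_⟩
  · rintro x ⟨r, hr, rfl⟩
    exact hmin hr
  · -- A Hermitian idempotent equals `PᴴP`.
    have h := posSemidef_conjTranspose_mul_self (BlochVariance.bloch G r₀)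
    rwa [(BlochVariance.bloch_isHermitian hherm r₀).eq, ← pow_two, hr₀] at h
  · exact BlochVariance.bloch_trace (by omega) htr r₀
  · exact (hval r₀ hr₀).symm
  · rintro x ⟨ρ, hρ, hρ1, rfl⟩
    refine BlochVariance.variance_ge_of_pure hA' hB' ?_ hρ hρ1
    intro P hP hP2 hP1
    obtain ⟨r, hr, rfl⟩ := hproj P hP hP2 hP1
    rw [hval r hr]
    have h := hmin hr
    change r₀ ⬝ᵥ (T *ᵥ r₀) ≤ r ⬝ᵥ (T *ᵥ r) at h
    gcongr
end

section
/- Let n ≥ 3 and let G₁,…,G_{n²−1} be n×n complex Hermitian matrices with Tr(G_i) = 0 for all i and Tr(G_i G_j) = 2δ_{ij} for all i, j, and let D_k be as above, (D_k)_{ij} = (1/(n−2))·√(n(n−1)/2)·d_{ijk} with d_{ijk} = (1/4)·Re Tr((G_iG_j + G_jG_i)G_k). Given K observables A_μ = a₀^{(μ)}I + ∑_k (a_μ)_k G_k for μ = 1,…,K, with a₀^{(μ)} ∈ ℝ and a_μ ∈ ℝ^{n²−1}, set O = ∑_{μ=1}^{K} a_μ a_μᵀ and T = (n−2)·∑_{k=1}^{n²−1}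 Tr(O D_k)·D_k − (n−1)·O, and let Ω^ext_n = {r ∈ ℝ^{n²−1} : ρ(r)² = ρ(r)} where ρ(r) = (1/n)(I + √(n(n−1)/2)·∑_k r_k G_k). Then the minimum over all n×n density matrices ρ of ∑_{μ=1}^{K} var_ρ(A_μ) equals (2/n)·[ −(1/(n−1))·Tr(T) + min_{r ∈ Ω^ext_n} ⟨r, T r⟩ ], and also equals (2/n)·[ ∑_{μ=1}^{K} ‖a_μ‖² + min_{r ∈ Ω^ext_n} ⟨r, T r⟩ ]. -/
/-!
The total variance is a concave function of the density matrix (Jensen for `x ↦ x²`), and by the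
spectral theorem every density matrix is a convex combination of rank-one projections, so the
minimum is attained on pure states. Since `{I, G₁, …, G_{n²-1}}` is an orthogonal basis of the
matrix space, the unit-trace Hermitian matrices are exactly the matrices `ρ(r)` with
`r ∈ ℝ^{n²-1}`, and the pure states are the idempotent ones (`exists_bloch`).

Expanding in the basis, `∑ var_{ρ(r)}(A_μ)` equals
`(2/n) (∑ ‖a_μ‖² + (n-2) ∑ₖ rₖ Tr(O Dₖ) - (n-1) ⟨r, O r⟩)`. Idempotence of `ρ(r)`, tested against
`Gₖ`, says `⟨r, Dₖ r⟩ = rₖ`, which turns the term linear in `r` into a quadratic one and gives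
`(2/n) (∑ ‖a_μ‖² + ⟨r, T r⟩)` (`sum_var_of_idem`). Idempotence also forces `‖r‖ = 1`, so the set of
pure Bloch vectors is compact and the minimum of `⟨r, T r⟩` exists. Finally the Casimir identity
`∑ Gᵢ² ∝ I` makes every `Dₖ` traceless, whence `Tr T = -(n-1) ∑ ‖a_μ‖²` (`trace_T`).
-/

/-! ### Bloch vectors and structure constants -/

/-- The traceless observable `∑ₖ aₖ Gₖ` with real coefficient vector `a`. -/
noncomputable def lin {n N : ℕ} (G : Fin N → Matrix (Fin n) (Fin n) ℂ) (a : Fin N → ℝ) :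
    Matrix (Fin n) (Fin n) ℂ :=
  ∑ k, (a k : ℂ) • G k

/-- The scaling `√(n(n-1)/2)` that puts pure states on the unit sphere. -/
noncomputable def blochConst (n : ℕ) : ℝ := Real.sqrt ((n : ℝ) * ((n : ℝ) - 1) / 2)

/-- The matrix `(1/n)(I + √(n(n-1)/2) ∑ₖ rₖ Gₖ)` with Bloch vector `r`. -/
noncomputable def bloch {n N : ℕ} (G : Fin N → Matrix (Fin n) (Fin n) ℂ) (r : Fin N → ℝ) :
    Matrix (Fin n) (Fin n) ℂ :=
  ((1 : ℂ) / n) • ((1 : Matrix (Fin n) (Fin n) ℂ) + ((blochConst n : ℝ) : ℂ) • lin G r)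

/-- The unnormalized symmetric structure constants `Re Tr((Gᵢ Gⱼ + Gⱼ Gᵢ) Gₖ)`. -/
noncomputable def dsym {n N : ℕ} (G : Fin N → Matrix (Fin n) (Fin n) ℂ) (i j k : Fin N) : ℝ :=
  ((G i * G j + G j * G i) * G k).trace.re

lemma blochConst_sq {n : ℕ} (hn : 3 ≤ n) : blochConst n ^ 2 = (n : ℝ) * ((n : ℝ) - 1) / 2 := by
  have : (3 : ℝ) ≤ n := by exact_mod_cast hn
  exact Real.sq_sqrt (by nlinarith)

lemma blochConst_pos {n : ℕ} (hn : 3 ≤ n) : 0 < blochConst n := by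
  have : (3 : ℝ) ≤ n := by exact_mod_cast hn
  exact Real.sqrt_pos.2 (by nlinarith)

lemma trace_mul_real {n : ℕ} {X Y : Matrix (Fin n) (Fin n) ℂ} (hX : X.IsHermitian)
    (hY : Y.IsHermitian) : (((X * Y).trace.re : ℝ) : ℂ) = (X * Y).trace := by
  apply Complex.conj_eq_iff_re.1
  have := Matrix.trace_conjTranspose (X * Y)
  rw [Matrix.conjTranspose_mul, hX.eq, hY.eq, Matrix.trace_mul_comm] at this
  exact this.symm

lemma isHermitian_lin {n N : ℕ} {G : Fin N → Matrix (Fin n) (Fin n) ℂ}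
    (hherm : ∀ i, (G i).IsHermitian) (a : Fin N → ℝ) : (lin G a).IsHermitian := by
  unfold lin Matrix.IsHermitian
  rw [Matrix.conjTranspose_sum]
  refine Finset.sum_congr rfl fun k _ => ?_
  rw [Matrix.conjTranspose_smul, (hherm k).eq]
  simp

lemma trace_lin {n N : ℕ} {G : Fin N → Matrix (Fin n) (Fin n) ℂ}
    (htr : ∀ i, (G i).trace = 0) (a : Fin N → ℝ) : (lin G a).trace = 0 := by
  simp [lin, Matrix.trace_sum, htr]

lemma trace_lin_mul {n N : ℕ} {G : Fin N → Matrix (Fin n) (Fin n) ℂ}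
    (horth : ∀ i j, (G i * G j).trace = if i = j then 2 else 0) (a : Fin N → ℝ) (k : Fin N) :
    (lin G a * G k).trace = ((2 * a k : ℝ) : ℂ) := by
  simp [lin, Finset.sum_mul, Matrix.trace_sum, horth, mul_comm]

lemma trace_lin_mul_lin {n N : ℕ} {G : Fin N → Matrix (Fin n) (Fin n) ℂ}
    (horth : ∀ i j, (G i * G j).trace = if i = j then 2 else 0) (a b : Fin N → ℝ) :
    (lin G a * lin G b).trace = ((2 * ∑ k, a k * b k : ℝ) : ℂ) := by
  conv_lhs => rw [lin.eq_def G b]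
  rw [Finset.mul_sum, Matrix.trace_sum]
  simp only [Matrix.mul_smul, Matrix.trace_smul, trace_lin_mul horth]
  push_cast
  rw [Finset.mul_sum]
  refine Finset.sum_congr rfl fun k _ => ?_
  simp only [smul_eq_mul]
  ring

lemma coe_dsym {n N : ℕ} {G : Fin N → Matrix (Fin n) (Fin n) ℂ}
    (hherm : ∀ i, (G i).IsHermitian) (i j k : Fin N) :
    ((dsym G i j k : ℝ) : ℂ) = ((G i * G j + G j * G i) * G k).trace := by
  refine trace_mul_real ?_ (hherm k)
  unfold Matrix.IsHermitian
  rw [Matrix.conjTranspose_add, Matrix.conjTranspose_mul, Matrix.conjTranspose_mul,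
    (hherm i).eq, (hherm j).eq, add_comm]

lemma dsym_comm {n N : ℕ} (G : Fin N → Matrix (Fin n) (Fin n) ℂ) (i j k : Fin N) :
    dsym G i j k = dsym G j i k := by
  rw [dsym, dsym, add_comm]

/-- Only the symmetric part of `Gᵢ Gⱼ` contributes to the square of `∑ aᵢ Gᵢ`. -/
lemma trace_lin_sq_mul {n N : ℕ} {G : Fin N → Matrix (Fin n) (Fin n) ℂ}
    (hherm : ∀ i, (G i).IsHermitian) (a : Fin N → ℝ) (k : Fin N) :
    (lin G a * lin G a * G k).trace
      = (((1 / 2) * ∑ i, ∑ j, a i * a j * dsym G i j k : ℝ) : ℂ) := by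
  have h1 : (lin G a * lin G a * G k).trace
      = ∑ i, ∑ j, (a i : ℂ) * a j * (G i * G j * G k).trace := by
    simp only [lin, Finset.sum_mul, Finset.mul_sum, Matrix.trace_sum, Matrix.smul_mul,
      Matrix.mul_smul, Matrix.trace_smul, smul_eq_mul]
    rw [Finset.sum_comm]
    refine Finset.sum_congr rfl fun i _ => Finset.sum_congr rfl fun j _ => ?_
    ring
  have h2 : (lin G a * lin G a * G k).trace
      = ∑ i, ∑ j, (a i : ℂ) * a j * (G j * G i * G k).trace := by
    rw [h1, Finset.sum_comm]
    refine Finset.sum_congr rfl fun i _ => Finset.sum_congr rfl fun j _ => ?_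
    ring
  have h3 : ((∑ i, ∑ j, a i * a j * dsym G i j k : ℝ) : ℂ)
      = (lin G a * lin G a * G k).trace + (lin G a * lin G a * G k).trace := by
    conv_rhs => congr; rw [h1]; rfl; rw [h2]
    push_cast
    simp only [coe_dsym hherm, add_mul, Matrix.trace_add, mul_add, Finset.sum_add_distrib]
  push_cast at h3 ⊢
  rw [h3]
  ring

/-! ### Completeness and the Casimir identity -/

/-- Completeness of `{I, G₁, …, G_{n²-1}}`: the map `X ↦ (Tr X, (Tr(Gᵢ X))ᵢ)` is surjective by
orthogonality, hence injective because both sides have dimension `n²`. -/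
lemma expand {n : ℕ} (hn : 3 ≤ n) {G : Fin (n ^ 2 - 1) → Matrix (Fin n) (Fin n) ℂ}
    (htr : ∀ i, (G i).trace = 0)
    (horth : ∀ i j, (G i * G j).trace = if i = j then 2 else 0)
    (X : Matrix (Fin n) (Fin n) ℂ) :
    X = (X.trace / n) • (1 : Matrix (Fin n) (Fin n) ℂ)
      + ∑ i, ((G i * X).trace / 2) • G i := by
  have hn0 : (n : ℂ) ≠ 0 := by
    have : n ≠ 0 := by omega
    exact_mod_cast this
  let Φ : Matrix (Fin n) (Fin n) ℂ →ₗ[ℂ] ℂ × (Fin (n ^ 2 - 1) → ℂ) :=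
    { toFun := fun X => (X.trace, fun i => (G i * X).trace)
      map_add' := fun X Y => by
        ext
        · simp
        · simp [mul_add]
      map_smul' := fun c X => by
        ext
        · simp
        · simp }
  have key : ∀ (t : ℂ) (v : Fin (n ^ 2 - 1) → ℂ),
      Φ ((t / n) • (1 : Matrix (Fin n) (Fin n) ℂ) + ∑ i, (v i / 2) • G i) = (t, v) := by
    intro t v
    apply Prod.ext
    · simp [Φ, Matrix.trace_sum, htr, hn0]
    · funext j
      simp [Φ, mul_add, Finset.mul_sum, Matrix.trace_sum, htr, horth]
  have hsurj : Function.Surjective Φ := fun p => ⟨_, key p.1 p.2⟩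
  have hdim : Module.finrank ℂ (Matrix (Fin n) (Fin n) ℂ)
      = Module.finrank ℂ (ℂ × (Fin (n ^ 2 - 1) → ℂ)) := by
    have : 1 ≤ n ^ 2 := Nat.one_le_pow _ _ (by omega)
    simp [Module.finrank_matrix]
    rw [← sq]
    omega
  have hinj := (LinearMap.injective_iff_surjective_of_finrank_eq_finrank hdim).2 hsurj
  exact hinj (key X.trace fun i => (G i * X).trace).symm

/-- The Casimir element `∑ᵢ Gᵢ²` is a multiple of the identity. -/
lemma casimir {n : ℕ} (hn : 3 ≤ n) {G : Fin (n ^ 2 - 1) → Matrix (Fin n) (Fin n) ℂ}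
    (htr : ∀ i, (G i).trace = 0)
    (horth : ∀ i j, (G i * G j).trace = if i = j then 2 else 0) :
    ∑ i, G i * G i = (2 * ((n : ℂ) - 1 / n)) • (1 : Matrix (Fin n) (Fin n) ℂ) := by
  have hn0 : (n : ℂ) ≠ 0 := by
    have : n ≠ 0 := by omega
    exact_mod_cast this
  ext p q
  -- The expansion of the matrix unit `E_{bp}`, read at the entry `(b, q)`, summed over `b`.
  have h : ∀ b, (if p = q then (1 : ℂ) else 0)
      = (if b = p then (if p = q then 1 / (n : ℂ) else 0) else 0)
        + ∑ i, (G i p b * G i b q) / 2 := by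
    intro b
    have := congrFun (congrFun (expand hn htr horth (Matrix.single b p 1)) b) q
    have ht : ∀ i, (G i * Matrix.single b p 1).trace = G i p b := by
      intro i
      simp [Matrix.trace_mul_single]
    simp only [Matrix.add_apply, Matrix.sum_apply, Matrix.smul_apply, ht, smul_eq_mul] at this
    rw [Matrix.single_apply] at this
    simp only [true_and] at this
    rw [this]
    congr 1
    · by_cases hb : b = p
      · subst hb
        simp [Matrix.one_apply]
      · simp [hb]
    · refine Finset.sum_congr rfl fun i _ => ?_
      ring
  have h2 := Finset.sum_congr (rfl : (Finset.univ : Finset (Fin n)) = Finset.univ)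
    fun b _ => h b
  rw [Finset.sum_add_distrib, Finset.sum_comm] at h2
  simp only [Finset.sum_const, Finset.card_univ, Fintype.card_fin, nsmul_eq_mul,
    Finset.sum_ite_eq', Finset.mem_univ, if_true, ← Finset.sum_div] at h2
  simp only [Matrix.sum_apply, Matrix.mul_apply, Matrix.smul_apply, Matrix.one_apply, smul_eq_mul]
  split_ifs at h2 ⊢ with hpq
  · linear_combination -2 * h2
  · linear_combination -2 * h2

lemma sum_dsym {n : ℕ} (hn : 3 ≤ n) {G : Fin (n ^ 2 - 1) → Matrix (Fin n) (Fin n) ℂ}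
    (htr : ∀ i, (G i).trace = 0)
    (horth : ∀ i j, (G i * G j).trace = if i = j then 2 else 0) (k : Fin (n ^ 2 - 1)) :
    ∑ i, dsym G i i k = 0 := by
  have h : ((∑ i, (G i * G i)) * G k).trace = 0 := by
    rw [casimir hn htr horth]
    simp [htr]
  simp only [dsym]
  rw [← Complex.re_sum, ← Matrix.trace_sum, ← Finset.sum_mul, Finset.sum_add_distrib, add_mul,
    Matrix.trace_add, h]
  simp

/-! ### Bloch parametrization and pure states -/

lemma trace_bloch {n N : ℕ} (hn : 3 ≤ n) {G : Fin N → Matrix (Fin n) (Fin n) ℂ}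
    (htr : ∀ i, (G i).trace = 0) (r : Fin N → ℝ) : (bloch G r).trace = 1 := by
  have hn0 : (n : ℂ) ≠ 0 := by
    have : n ≠ 0 := by omega
    exact_mod_cast this
  simp [bloch, trace_lin htr, hn0]

lemma isHermitian_bloch {n N : ℕ} {G : Fin N → Matrix (Fin n) (Fin n) ℂ}
    (hherm : ∀ i, (G i).IsHermitian) (r : Fin N → ℝ) : (bloch G r).IsHermitian := by
  unfold bloch Matrix.IsHermitian
  rw [Matrix.conjTranspose_smul, Matrix.conjTranspose_add, Matrix.conjTranspose_smul,
    (isHermitian_lin hherm r).eq]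
  simp

lemma exists_bloch {n : ℕ} (hn : 3 ≤ n) {G : Fin (n ^ 2 - 1) → Matrix (Fin n) (Fin n) ℂ}
    (hherm : ∀ i, (G i).IsHermitian)
    (htr : ∀ i, (G i).trace = 0)
    (horth : ∀ i j, (G i * G j).trace = if i = j then 2 else 0)
    {ρ : Matrix (Fin n) (Fin n) ℂ} (hρ : ρ.IsHermitian) (hρ1 : ρ.trace = 1) :
    ∃ r, ρ = bloch G r := by
  have hn0 : (n : ℂ) ≠ 0 := by
    have : n ≠ 0 := by omega
    exact_mod_cast this
  have hc : (blochConst n : ℂ) ≠ 0 := by exact_mod_cast (blochConst_pos hn).ne'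
  refine ⟨fun k => n / (2 * blochConst n) * (G k * ρ).trace.re, ?_⟩
  conv_lhs => rw [expand hn htr horth ρ]
  rw [bloch, lin, hρ1, smul_add, Finset.smul_sum, Finset.smul_sum]
  congr 1
  refine Finset.sum_congr rfl fun k _ => ?_
  rw [smul_smul, smul_smul]
  congr 1
  push_cast
  rw [trace_mul_real (hherm k) hρ]
  field_simp

/-- `Tr ρ² = Tr ρ` places idempotent Bloch vectors on the unit sphere. -/
lemma norm_of_idem {n N : ℕ} (hn : 3 ≤ n) {G : Fin N → Matrix (Fin n) (Fin n) ℂ}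
    (htr : ∀ i, (G i).trace = 0)
    (horth : ∀ i j, (G i * G j).trace = if i = j then 2 else 0) {r : Fin N → ℝ}
    (h : bloch G r ^ 2 = bloch G r) : ∑ k, r k * r k = 1 := by
  have hn3 : (3 : ℝ) ≤ n := by exact_mod_cast hn
  have hn0 : (n : ℝ) ≠ 0 := by linarith
  have h1 := congrArg Matrix.trace h
  rw [trace_bloch hn htr, bloch, sq] at h1
  simp only [Matrix.smul_mul, Matrix.mul_smul, mul_add, add_mul, mul_one, one_mul,
    Matrix.trace_add, Matrix.trace_smul, trace_lin htr, trace_lin_mul_lin horth, smul_eq_mul,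
    Matrix.trace_one, Fintype.card_fin, mul_zero, add_zero, zero_add, smul_add] at h1
  have h2 : (1 / (n : ℝ)) * (1 / n * (n + blochConst n * (blochConst n * (2 * ∑ k, r k * r k))))
      = 1 := by
    have : (((1 / (n : ℝ)) * (1 / n * (n + blochConst n * (blochConst n
      * (2 * ∑ k, r k * r k)))) : ℝ) : ℂ) = ((1 : ℝ) : ℂ) := by
      rw [Complex.ofReal_one, ← h1]
      push_cast
      ring
    exact_mod_cast this
  have hc := blochConst_sq hn
  generalize ∑ k, r k * r k = s at *
  field_simp at h2
  have h3 : (n : ℝ) * (n - 1) * (s - 1) = 0 := by linear_combination h2 - 2 * s * hc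
  rcases mul_eq_zero.1 h3 with h4 | h4
  · nlinarith
  · linarith

/-- `Tr(ρ² Gₖ) = Tr(ρ Gₖ)` in terms of the structure constants. -/
lemma dsym_of_idem {n N : ℕ} (hn : 3 ≤ n) {G : Fin N → Matrix (Fin n) (Fin n) ℂ}
    (hherm : ∀ i, (G i).IsHermitian)
    (htr : ∀ i, (G i).trace = 0)
    (horth : ∀ i j, (G i * G j).trace = if i = j then 2 else 0) {r : Fin N → ℝ}
    (h : bloch G r ^ 2 = bloch G r) (k : Fin N) :
    blochConst n * ∑ i, ∑ j, r i * r j * dsym G i j k = 4 * ((n : ℝ) - 2) * r k := by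
  have hn3 : (3 : ℝ) ≤ n := by exact_mod_cast hn
  have hn0 : (n : ℝ) ≠ 0 := by linarith
  have h1 := congrArg (fun X => (X * G k).trace) h
  simp only [bloch, sq] at h1
  simp only [Matrix.smul_mul, Matrix.mul_smul, mul_add, add_mul, mul_one, one_mul,
    Matrix.trace_add, Matrix.trace_smul, htr, trace_lin_mul horth, smul_eq_mul,
    trace_lin_sq_mul hherm, mul_zero, zero_add, smul_add] at h1
  generalize ∑ i, ∑ j, r i * r j * dsym G i j k = S at *
  have h2 : 1 / (n : ℝ) * (1 / n * (blochConst n * (2 * r k) + (blochConst n * (2 * r k)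
      + blochConst n * (blochConst n * (1 / 2 * S))))) = 1 / n * (blochConst n * (2 * r k)) := by
    have : ((1 / (n : ℝ) * (1 / n * (blochConst n * (2 * r k) + (blochConst n * (2 * r k)
      + blochConst n * (blochConst n * (1 / 2 * S))))) : ℝ) : ℂ)
        = ((1 / n * (blochConst n * (2 * r k)) : ℝ) : ℂ) := by
      push_cast at h1 ⊢
      linear_combination h1
    exact_mod_cast this
  have hc := (blochConst_pos hn).ne'
  field_simp at h2
  linear_combination h2

/-! ### The variance in Bloch coordinates -/

/-- The variance of `a₀ I + ∑ aₖ Gₖ` in the state with Bloch vector `r`. -/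
lemma var_bloch {n N : ℕ} (hn : 3 ≤ n) {G : Fin N → Matrix (Fin n) (Fin n) ℂ}
    (hherm : ∀ i, (G i).IsHermitian)
    (htr : ∀ i, (G i).trace = 0)
    (horth : ∀ i j, (G i * G j).trace = if i = j then 2 else 0) (a₀ : ℝ) (a r : Fin N → ℝ) :
    (((a₀ : ℂ) • (1 : Matrix (Fin n) (Fin n) ℂ) + lin G a) ^ 2 * bloch G r).trace
      - ((((a₀ : ℂ) • (1 : Matrix (Fin n) (Fin n) ℂ) + lin G a) * bloch G r).trace) ^ 2
    = (((2 / n) * (∑ k, a k * a k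
        + blochConst n / 4 * ∑ k, r k * ∑ i, ∑ j, a i * a j * dsym G i j k
        - (n - 1) * (∑ k, a k * r k) ^ 2) : ℝ) : ℂ) := by
  have hn3 : (3 : ℝ) ≤ n := by exact_mod_cast hn
  have hn0 : (n : ℂ) ≠ 0 := by
    have : n ≠ 0 := by omega
    exact_mod_cast this
  have hB : (lin G a * bloch G r).trace = ((2 * blochConst n / n * ∑ k, a k * r k : ℝ) : ℂ) := by
    rw [bloch]
    simp only [Matrix.mul_smul, mul_add, mul_one, Matrix.trace_add, Matrix.trace_smul,
      trace_lin htr, trace_lin_mul_lin horth, smul_eq_mul]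
    push_cast
    ring
  have hB2 : (lin G a * lin G a * bloch G r).trace = ((1 / n * (2 * ∑ k, a k * a k
      + blochConst n * ∑ k, r k * (1 / 2 * ∑ i, ∑ j, a i * a j * dsym G i j k)) : ℝ) : ℂ) := by
    rw [bloch, lin.eq_def G r]
    simp only [Matrix.mul_smul, mul_add, mul_one, Matrix.trace_add, Matrix.trace_smul,
      trace_lin_mul_lin horth, smul_eq_mul, Finset.mul_sum, Matrix.trace_sum,
      trace_lin_sq_mul hherm]
    push_cast
    simp only [Finset.mul_sum]
  have hexp : ((a₀ : ℂ) • (1 : Matrix (Fin n) (Fin n) ℂ) + lin G a) ^ 2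
      = ((a₀ : ℂ) ^ 2) • (1 : Matrix (Fin n) (Fin n) ℂ) + (2 * (a₀ : ℂ)) • lin G a
        + lin G a * lin G a := by
    rw [sq]
    simp only [add_mul, mul_add, Matrix.smul_mul, Matrix.mul_smul, one_mul, mul_one, smul_smul]
    module
  have hc : (blochConst n : ℂ) ^ 2 = (n : ℂ) * ((n : ℂ) - 1) / 2 := by
    exact_mod_cast congrArg (fun x : ℝ => (x : ℂ)) (blochConst_sq hn)
  have hS : ∑ k, r k * (1 / 2 * ∑ i, ∑ j, a i * a j * dsym G i j k)
      = 1 / 2 * ∑ k, r k * ∑ i, ∑ j, a i * a j * dsym G i j k := by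
    rw [Finset.mul_sum]
    refine Finset.sum_congr rfl fun k _ => ?_
    ring
  rw [hS] at hB2
  rw [hexp]
  simp only [add_mul, Matrix.smul_mul, one_mul, Matrix.trace_add, Matrix.trace_smul,
    trace_bloch hn htr, hB, hB2, smul_eq_mul]
  generalize ∑ k, r k * ∑ i, ∑ j, a i * a j * dsym G i j k = S
  generalize ∑ k, a k * a k = s
  generalize ∑ k, a k * r k = t
  push_cast
  field_simp
  linear_combination (-32 * (t : ℂ) ^ 2) * hc

open Matrix ComplexOrder in
/-- On a pure state `⟨r, Dₖ r⟩ = rₖ`, so the total variance is, up to a constant, the quadratic form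
of `T`. -/
lemma sum_var_of_idem {n K : ℕ} (hn : 3 ≤ n)
    {G : Fin (n ^ 2 - 1) → Matrix (Fin n) (Fin n) ℂ}
    (hherm : ∀ i, (G i).IsHermitian)
    (htr : ∀ i, (G i).trace = 0)
    (horth : ∀ i j, (G i * G j).trace = if i = j then 2 else 0)
    {D : Fin (n ^ 2 - 1) → Matrix (Fin (n ^ 2 - 1)) (Fin (n ^ 2 - 1)) ℝ}
    (hD : ∀ k i j, D k i j = (1 / ((n : ℝ) - 2)) * blochConst n * ((1 / 4) * dsym G i j k))
    (a₀ : Fin K → ℝ) (a : Fin K → Fin (n ^ 2 - 1) → ℝ)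
    {O : Matrix (Fin (n ^ 2 - 1)) (Fin (n ^ 2 - 1)) ℝ}
    (hO : ∀ i j, O i j = ∑ μ, a μ i * a μ j)
    {T : Matrix (Fin (n ^ 2 - 1)) (Fin (n ^ 2 - 1)) ℝ}
    (hT : T = ((n : ℝ) - 2) • (∑ k, (O * D k).trace • D k) - ((n : ℝ) - 1) • O)
    {r : Fin (n ^ 2 - 1) → ℝ} (h : bloch G r ^ 2 = bloch G r) :
    (∑ μ, ((((a₀ μ : ℂ) • (1 : Matrix (Fin n) (Fin n) ℂ) + lin G (a μ)) ^ 2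
          * bloch G r).trace
      - ((((a₀ μ : ℂ) • (1 : Matrix (Fin n) (Fin n) ℂ) + lin G (a μ))
          * bloch G r).trace) ^ 2)).re
    = (2 / n) * ((∑ μ, ∑ k, (a μ k) ^ 2) + r ⬝ᵥ (T *ᵥ r)) := by
  have hn3 : (3 : ℝ) ≤ n := by exact_mod_cast hn
  have hn2 : (n : ℝ) - 2 ≠ 0 := by linarith
  have hquad : ∀ M : Matrix (Fin (n ^ 2 - 1)) (Fin (n ^ 2 - 1)) ℝ,
      r ⬝ᵥ (M *ᵥ r) = ∑ i, ∑ j, r i * r j * M i j := by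
    intro M
    simp only [dotProduct, Matrix.mulVec, Finset.mul_sum]
    refine Finset.sum_congr rfl fun i _ => Finset.sum_congr rfl fun j _ => ?_
    ring
  have hDr : ∀ k, r ⬝ᵥ (D k *ᵥ r) = r k := by
    intro k
    have h1 := dsym_of_idem hn hherm htr horth h k
    have h2 : r ⬝ᵥ (D k *ᵥ r) = (1 / ((n : ℝ) - 2)) * (1 / 4)
        * (blochConst n * ∑ i, ∑ j, r i * r j * dsym G i j k) := by
      rw [hquad]
      simp only [hD, Finset.mul_sum]
      refine Finset.sum_congr rfl fun i _ => Finset.sum_congr rfl fun j _ => ?_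
      ring
    rw [h2, h1]
    field_simp
  have hOr : r ⬝ᵥ (O *ᵥ r) = ∑ μ, (∑ k, a μ k * r k) ^ 2 := by
    rw [hquad]
    simp only [hO, Finset.mul_sum]
    rw [Finset.sum_congr rfl fun i _ => Finset.sum_comm, Finset.sum_comm]
    refine Finset.sum_congr rfl fun μ _ => ?_
    rw [sq (∑ k, a μ k * r k), Finset.sum_mul_sum]
    refine Finset.sum_congr rfl fun i _ => Finset.sum_congr rfl fun j _ => ?_
    ring
  have hOD : ∀ k, ((n : ℝ) - 2) * (O * D k).trace
      = ∑ μ, blochConst n / 4 * ∑ i, ∑ j, a μ i * a μ j * dsym G i j k := by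
    intro k
    simp only [Matrix.trace, Matrix.diag, Matrix.mul_apply, hO, hD, Finset.mul_sum,
      Finset.sum_mul]
    conv_rhs => rw [Finset.sum_comm]
    refine Finset.sum_congr rfl fun i _ => ?_
    conv_rhs => rw [Finset.sum_comm]
    refine Finset.sum_congr rfl fun j _ => Finset.sum_congr rfl fun μ _ => ?_
    rw [dsym_comm G j i k]
    field_simp
  have hTr : r ⬝ᵥ (T *ᵥ r) = ∑ k, r k * (((n : ℝ) - 2) * (O * D k).trace)
      - (n - 1) * ∑ μ, (∑ k, a μ k * r k) ^ 2 := by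
    rw [hT, Matrix.sub_mulVec, Matrix.smul_mulVec, Matrix.smul_mulVec, dotProduct_sub,
      dotProduct_smul, dotProduct_smul, hOr, Matrix.sum_mulVec, dotProduct_sum]
    simp only [Matrix.smul_mulVec, dotProduct_smul, hDr, smul_eq_mul, Finset.mul_sum]
    congr 1
    refine Finset.sum_congr rfl fun k _ => ?_
    ring
  rw [Finset.sum_congr rfl fun μ _ => var_bloch hn hherm htr horth (a₀ μ) (a μ) r,
    ← Complex.ofReal_sum, Complex.ofReal_re, ← Finset.mul_sum, hTr]
  simp only [hOD, Finset.sum_sub_distrib, Finset.sum_add_distrib, sq]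
  have : ∑ k, r k * ∑ μ, blochConst n / 4 * ∑ i, ∑ j, a μ i * a μ j * dsym G i j k
      = ∑ μ, blochConst n / 4 * ∑ k, r k * ∑ i, ∑ j, a μ i * a μ j * dsym G i j k := by
    simp only [Finset.mul_sum (s := (Finset.univ : Finset (Fin K)))]
    rw [Finset.sum_comm]
    refine Finset.sum_congr rfl fun μ _ => ?_
    rw [Finset.mul_sum]
    refine Finset.sum_congr rfl fun k _ => ?_
    ring
  rw [this, ← Finset.mul_sum (a := (n : ℝ) - 1)]
  ring

/-- `Tr T` only sees `O`, because each `Dₖ` is traceless by the Casimir identity. -/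
lemma trace_T {n K : ℕ} (hn : 3 ≤ n)
    {G : Fin (n ^ 2 - 1) → Matrix (Fin n) (Fin n) ℂ}
    (htr : ∀ i, (G i).trace = 0)
    (horth : ∀ i j, (G i * G j).trace = if i = j then 2 else 0)
    {D : Fin (n ^ 2 - 1) → Matrix (Fin (n ^ 2 - 1)) (Fin (n ^ 2 - 1)) ℝ}
    (hD : ∀ k i j, D k i j = (1 / ((n : ℝ) - 2)) * blochConst n * ((1 / 4) * dsym G i j k))
    (a : Fin K → Fin (n ^ 2 - 1) → ℝ)
    {O : Matrix (Fin (n ^ 2 - 1)) (Fin (n ^ 2 - 1)) ℝ}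
    (hO : ∀ i j, O i j = ∑ μ, a μ i * a μ j)
    {T : Matrix (Fin (n ^ 2 - 1)) (Fin (n ^ 2 - 1)) ℝ}
    (hT : T = ((n : ℝ) - 2) • (∑ k, (O * D k).trace • D k) - ((n : ℝ) - 1) • O) :
    -(1 / ((n : ℝ) - 1)) * T.trace = ∑ μ, ∑ k, (a μ k) ^ 2 := by
  have hn3 : (3 : ℝ) ≤ n := by exact_mod_cast hn
  have hn1 : (n : ℝ) - 1 ≠ 0 := by linarith
  have hDt : ∀ k, (D k).trace = 0 := by
    intro k
    simp only [Matrix.trace, Matrix.diag, hD, ← Finset.mul_sum, sum_dsym hn htr horth k, mul_zero]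
  have hOt : O.trace = ∑ μ, ∑ k, (a μ k) ^ 2 := by
    simp only [Matrix.trace, Matrix.diag, hO, ← sq]
    exact Finset.sum_comm
  rw [hT, Matrix.trace_sub, Matrix.trace_smul, Matrix.trace_smul, Matrix.trace_sum]
  simp only [Matrix.trace_smul, hDt, hOt, smul_eq_mul, mul_zero, Finset.sum_const_zero]
  field_simp
  ring

/-! ### Reduction to pure states -/

open Matrix ComplexOrder in
lemma posSemidef_of_idem {n : ℕ} {P : Matrix (Fin n) (Fin n) ℂ} (hP : P.IsHermitian)
    (h : P ^ 2 = P) : P.PosSemidef := by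
  have := Matrix.posSemidef_conjTranspose_mul_self P
  rwa [hP.eq, ← sq, h] at this

open Matrix ComplexOrder in
/-- A density matrix is a convex combination of rank-one projections (spectral theorem). -/
lemma exists_pure_decomp {n : ℕ} {ρ : Matrix (Fin n) (Fin n) ℂ} (hρ : ρ.PosSemidef)
    (h1 : ρ.trace = 1) :
    ∃ (p : Fin n → ℝ) (P : Fin n → Matrix (Fin n) (Fin n) ℂ), (∀ j, 0 ≤ p j) ∧ ∑ j, p j = 1 ∧
      (∀ j, (P j).IsHermitian ∧ P j ^ 2 = P j ∧ (P j).trace = 1) ∧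
      ρ = ∑ j, (p j : ℂ) • P j := by
  have hH := hρ.1
  let U : Matrix (Fin n) (Fin n) ℂ := hH.eigenvectorUnitary
  have hU : Uᴴ * U = 1 := by
    have := Unitary.coe_star_mul_self hH.eigenvectorUnitary
    rwa [Matrix.star_eq_conjTranspose] at this
  let P : Fin n → Matrix (Fin n) (Fin n) ℂ := fun j => U * Matrix.single j j 1 * Uᴴ
  refine ⟨hH.eigenvalues, P, hρ.eigenvalues_nonneg, ?_, ?_, ?_⟩
  · have := hH.trace_eq_sum_eigenvalues
    rw [h1] at this
    have h2 := congrArg Complex.re this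
    rw [Complex.re_sum] at h2
    exact h2.symm
  · intro j
    refine ⟨?_, ?_, ?_⟩
    · simp [P, Matrix.IsHermitian, Matrix.conjTranspose_mul, Matrix.mul_assoc]
    · calc P j ^ 2 = U * Matrix.single j j 1 * (Uᴴ * U) * Matrix.single j j 1 * Uᴴ := by
            simp only [P, sq, Matrix.mul_assoc]
        _ = P j := by
            rw [hU, Matrix.mul_one, Matrix.mul_assoc U, Matrix.single_mul_single_same, one_mul]
    · simp only [P]
      rw [Matrix.trace_mul_comm, ← Matrix.mul_assoc, hU, Matrix.one_mul]
      simp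
  · have hs := hH.spectral_theorem
    rw [Unitary.conjStarAlgAut_apply] at hs
    have hd : Matrix.diagonal (RCLike.ofReal ∘ hH.eigenvalues : Fin n → ℂ)
        = ∑ j, (hH.eigenvalues j : ℂ) • Matrix.single j j (1 : ℂ) := by
      rw [← Matrix.sum_single_eq_diagonal]
      simp
    rw [hd] at hs
    conv_lhs => rw [hs]
    simp only [P, Finset.mul_sum, Finset.sum_mul, Matrix.mul_smul, Matrix.smul_mul]
    rfl

/-- Concavity of the variance in the state. -/
lemma var_concave {n : ℕ} {A : Matrix (Fin n) (Fin n) ℂ} (hA : A.IsHermitian)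
    {p : Fin n → ℝ} {P : Fin n → Matrix (Fin n) (Fin n) ℂ} (hp : ∀ j, 0 ≤ p j)
    (hp1 : ∑ j, p j = 1) (hP : ∀ j, (P j).IsHermitian) :
    ∑ j, p j * ((A ^ 2 * P j).trace - ((A * P j).trace) ^ 2).re
      ≤ ((A ^ 2 * ∑ j, (p j : ℂ) • P j).trace - ((A * ∑ j, (p j : ℂ) • P j).trace) ^ 2).re := by
  have h1 : (A ^ 2 * ∑ j, (p j : ℂ) • P j).trace = ∑ j, (p j : ℂ) * (A ^ 2 * P j).trace := by
    simp [Finset.mul_sum, Matrix.trace_sum]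
  have h2 : (A * ∑ j, (p j : ℂ) • P j).trace = ((∑ j, p j * (A * P j).trace.re : ℝ) : ℂ) := by
    push_cast
    simp only [trace_mul_real hA (hP _)]
    simp [Finset.mul_sum, Matrix.trace_sum]
  have h3 : ∀ j, ((A ^ 2 * P j).trace - ((A * P j).trace) ^ 2).re
      = (A ^ 2 * P j).trace.re - ((A * P j).trace.re) ^ 2 := by
    intro j
    rw [← trace_mul_real hA (hP j), ← Complex.ofReal_pow, Complex.sub_re, Complex.ofReal_re,
      Complex.ofReal_re]
  rw [h1, h2, ← Complex.ofReal_pow, Complex.sub_re, Complex.ofReal_re, Complex.re_sum]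
  simp only [h3, Complex.re_ofReal_mul, mul_sub, Finset.sum_sub_distrib]
  have hJ := (even_two.convexOn_pow (𝕜 := ℝ)).map_sum_le (t := Finset.univ) (w := p)
    (p := fun j => (A * P j).trace.re) (fun j _ => hp j) hp1 (fun _ _ => Set.mem_univ _)
  simp only [smul_eq_mul] at hJ
  linarith

lemma isCompact_idem {n N : ℕ} (hn : 3 ≤ n) {G : Fin N → Matrix (Fin n) (Fin n) ℂ}
    (htr : ∀ i, (G i).trace = 0)
    (horth : ∀ i j, (G i * G j).trace = if i = j then 2 else 0) :
    IsCompact {r : Fin N → ℝ | bloch G r ^ 2 = bloch G r} := by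
  have hcont : Continuous fun r : Fin N → ℝ => bloch G r := by
    unfold bloch lin
    fun_prop
  refine Metric.isCompact_of_isClosed_isBounded (isClosed_eq (hcont.pow 2) hcont) ?_
  refine (Metric.isBounded_closedBall (x := (0 : Fin N → ℝ)) (r := 1)).subset ?_
  intro r hr
  have h := norm_of_idem hn htr horth hr
  rw [mem_closedBall_zero_iff, pi_norm_le_iff_of_nonneg zero_le_one]
  intro k
  have h1 : r k * r k ≤ 1 := by
    rw [← h]
    exact Finset.single_le_sum (f := fun k => r k * r k) (fun i _ => mul_self_nonneg _)
      (Finset.mem_univ k)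
  rw [Real.norm_eq_abs, abs_le_one_iff_mul_self_le_one]
  exact h1


/-! ### The minimum -/

open Matrix ComplexOrder in
theorem stmt_8 (n : ℕ) (hn : 3 ≤ n) (K : ℕ)
    (G : Fin (n ^ 2 - 1) → Matrix (Fin n) (Fin n) ℂ)
    (hherm : ∀ i, (G i).IsHermitian)
    (htr : ∀ i, (G i).trace = 0)
    (horth : ∀ i j, (G i * G j).trace = if i = j then 2 else 0)
    (D : Fin (n ^ 2 - 1) → Matrix (Fin (n ^ 2 - 1)) (Fin (n ^ 2 - 1)) ℝ)
    (hD : ∀ k i j, D k i j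
      = (1 / ((n : ℝ) - 2)) * Real.sqrt ((n : ℝ) * ((n : ℝ) - 1) / 2)
          * ((1 / 4) * ((G i * G j + G j * G i) * G k).trace.re))
    (a₀ : Fin K → ℝ) (a : Fin K → Fin (n ^ 2 - 1) → ℝ)
    (A : Fin K → Matrix (Fin n) (Fin n) ℂ)
    (hA : ∀ μ, A μ = (a₀ μ : ℂ) • (1 : Matrix (Fin n) (Fin n) ℂ)
        + ∑ k, (a μ k : ℂ) • G k)
    (O : Matrix (Fin (n ^ 2 - 1)) (Fin (n ^ 2 - 1)) ℝ)
    (hO : ∀ i j, O i j = ∑ μ, a μ i * a μ j)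
    (T : Matrix (Fin (n ^ 2 - 1)) (Fin (n ^ 2 - 1)) ℝ)
    (hT : T = ((n : ℝ) - 2) • (∑ k, (O * D k).trace • D k) - ((n : ℝ) - 1) • O) :
    ∃ m : ℝ,
      IsLeast {x : ℝ | ∃ r : Fin (n ^ 2 - 1) → ℝ,
          (((1 : ℂ) / n) • ((1 : Matrix (Fin n) (Fin n) ℂ)
              + ((Real.sqrt ((n : ℝ) * ((n : ℝ) - 1) / 2) : ℝ) : ℂ)
                  • ∑ k, (r k : ℂ) • G k)) ^ 2
            = ((1 : ℂ) / n) • ((1 : Matrix (Fin n) (Fin n) ℂ)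
              + ((Real.sqrt ((n : ℝ) * ((n : ℝ) - 1) / 2) : ℝ) : ℂ)
                  • ∑ k, (r k : ℂ) • G k)
          ∧ x = r ⬝ᵥ (T *ᵥ r)} m
      ∧ IsLeast {x : ℝ | ∃ ρ : Matrix (Fin n) (Fin n) ℂ,
          ρ.PosSemidef ∧ ρ.trace = 1 ∧
          x = (∑ μ, ((A μ ^ 2 * ρ).trace - ((A μ * ρ).trace) ^ 2)).re}
        ((2 / (n : ℝ)) * (-(1 / ((n : ℝ) - 1)) * T.trace + m))
      ∧ (2 / (n : ℝ)) * (-(1 / ((n : ℝ) - 1)) * T.trace + m)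
          = (2 / (n : ℝ)) * ((∑ μ, ∑ k, (a μ k) ^ 2) + m) := by
  have hD' : ∀ k i j, D k i j
      = (1 / ((n : ℝ) - 2)) * blochConst n * ((1 / 4) * dsym G i j k) := hD
  have hval : ∀ r, bloch G r ^ 2 = bloch G r →
      (∑ μ, ((A μ ^ 2 * bloch G r).trace - ((A μ * bloch G r).trace) ^ 2)).re
        = (2 / (n : ℝ)) * (-(1 / ((n : ℝ) - 1)) * T.trace + r ⬝ᵥ (T *ᵥ r)) := by
    intro r hr
    rw [trace_T hn htr horth hD' a hO hT,
      ← sum_var_of_idem hn hherm htr horth hD' a₀ a hO hT hr]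
    simp only [hA, lin]
  have hAherm : ∀ μ, (A μ).IsHermitian := by
    intro μ
    rw [hA]
    refine Matrix.IsHermitian.add ?_ (isHermitian_lin hherm (a μ))
    simp [Matrix.IsHermitian, Matrix.conjTranspose_smul]
  have hnpos : (0 : ℝ) < n := by
    have : 0 < n := by omega
    exact_mod_cast this
  have hne : {r : Fin (n ^ 2 - 1) → ℝ | bloch G r ^ 2 = bloch G r}.Nonempty := by
    let i₀ : Fin n := ⟨0, by omega⟩
    obtain ⟨r, hr⟩ := exists_bloch hn hherm htr horth
      (ρ := Matrix.single i₀ i₀ 1) (by simp [Matrix.IsHermitian]) (by simp)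
    refine ⟨r, ?_⟩
    simp [← hr, sq]
  obtain ⟨r₀, hr₀, hmin⟩ := (isCompact_idem hn htr horth).exists_isMinOn hne
    (f := fun r => r ⬝ᵥ (T *ᵥ r)) (by
      simp only [dotProduct, Matrix.mulVec]
      fun_prop)
  refine ⟨r₀ ⬝ᵥ (T *ᵥ r₀), ⟨⟨r₀, hr₀, rfl⟩, ?_⟩, ⟨⟨bloch G r₀, ?_, ?_, ?_⟩, ?_⟩, ?_⟩
  · rintro x ⟨r, hr, rfl⟩
    exact hmin hr
  · exact posSemidef_of_idem (isHermitian_bloch hherm r₀) hr₀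
  · exact trace_bloch hn htr r₀
  · exact (hval r₀ hr₀).symm
  · rintro x ⟨ρ, hρ, hρ1, rfl⟩
    obtain ⟨p, P, hp, hp1, hP, rfl⟩ := exists_pure_decomp hρ hρ1
    have hpure : ∀ j, (2 / (n : ℝ)) * (-(1 / ((n : ℝ) - 1)) * T.trace + r₀ ⬝ᵥ (T *ᵥ r₀))
        ≤ ∑ μ, ((A μ ^ 2 * P j).trace - ((A μ * P j).trace) ^ 2).re := by
      intro j
      obtain ⟨hj, hj2, hj1⟩ := hP j
      obtain ⟨r, hr⟩ := exists_bloch hn hherm htr horth hj hj1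
      rw [hr] at hj2 ⊢
      rw [← Complex.re_sum, hval r hj2]
      have : r₀ ⬝ᵥ (T *ᵥ r₀) ≤ r ⬝ᵥ (T *ᵥ r) := hmin hj2
      gcongr
    calc (2 / (n : ℝ)) * (-(1 / ((n : ℝ) - 1)) * T.trace + r₀ ⬝ᵥ (T *ᵥ r₀))
        = ∑ j, p j * ((2 / (n : ℝ))
            * (-(1 / ((n : ℝ) - 1)) * T.trace + r₀ ⬝ᵥ (T *ᵥ r₀))) := by
          rw [← Finset.sum_mul, hp1, one_mul]
      _ ≤ ∑ j, p j * ∑ μ, ((A μ ^ 2 * P j).trace - ((A μ * P j).trace) ^ 2).re :=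
          Finset.sum_le_sum fun j _ => mul_le_mul_of_nonneg_left (hpure j) (hp j)
      _ = ∑ μ, ∑ j, p j * ((A μ ^ 2 * P j).trace - ((A μ * P j).trace) ^ 2).re := by
          simp only [Finset.mul_sum]
          exact Finset.sum_comm
      _ ≤ _ := by
          rw [Complex.re_sum]
          exact Finset.sum_le_sum fun μ _ => var_concave (hAherm μ) hp hp1 fun j => (hP j).1
  · rw [trace_T hn htr horth hD' a hO hT]
end

section
/- Let A = [[−1,0,0],[0,0,0],[0,0,1]] and B = [[0,1,0],[1,0,i],[0,−i,0]] be 3×3 Hermitian matrices. Then the minimum over all 3×3 density matrices ρ of var_ρ(A) + var_ρ(B) equals 15/32: for every density matrix ρ, var_ρ(A) + var_ρ(B) ≥ 15/32, and equality is attained, in particular by the pure state ρ = |ψ⟩⟨ψ| where ψ = ((√14/8)i, (3/4)i, √14/8) ∈ ℂ³. -/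
/-!
The sum of variances at `ρ` depends on `ρ` only through `a = ρ₀₀`, `b = ρ₁₁`, `c = ρ₂₂`,
`y = Im ρ₀₂` and `S = Re ρ₀₁ + Im ρ₁₂`: it equals `2 + 2y - (a - c)² - 4S²`.
In the orthonormal basis `(i, 0, 1)/√2`, `(0, i, 0)`, `(i, 0, -1)/√2`, the diagonal entries of `ρ`
are `t = (a + c)/2 + y`, `b` and `g = (a + c)/2 - y`, and its `2 × 2` minors give
`(a - c)² ≤ 4tg` and `S² ≤ 2tb`. With `b = 1 - t - g` the objective is therefore at least
`2 - 7t + 8t² + g(4t - 1)`. If `t ≥ 1/4` this is at least `2 - 7t + 8t² ≥ 2 - 49/32 = 15/32`;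
otherwise `g ≤ 1 - t` bounds it below by `1 - 2t + 4t² ≥ 3/4`. The first case is tight at
`t = 7/16`, `g = 0`, which is the state `ψ`.
-/

/-- The sum of variances as a function of the entries of a Hermitian matrix of trace one. -/
lemma variance_sum_eq (ρ : Matrix (Fin 3) (Fin 3) ℂ) (h : ρ.IsHermitian) (htr : ρ.trace = 1) :
    (((!![-1, 0, 0; 0, 0, 0; 0, 0, 1] ^ 2 * ρ).trace
        - ((!![-1, 0, 0; 0, 0, 0; 0, 0, 1] * ρ).trace) ^ 2)
      + ((!![0, 1, 0; 1, 0, Complex.I; 0, -Complex.I, 0] ^ 2 * ρ).trace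
        - ((!![0, 1, 0; 1, 0, Complex.I; 0, -Complex.I, 0] * ρ).trace) ^ 2)).re
    = 2 + 2 * (ρ 0 2).im - ((ρ 0 0).re - (ρ 2 2).re) ^ 2
      - 4 * ((ρ 0 1).re + (ρ 1 2).im) ^ 2 := by
  have hr (i j : Fin 3) : (ρ j i).re = (ρ i j).re := by
    simpa using congrArg Complex.re (h.apply i j)
  have hi (i j : Fin 3) : (ρ j i).im = -(ρ i j).im := by
    have := congrArg Complex.im (h.apply i j)
    simp at this
    linarith
  have h0 := hi 0 0
  have h2 := hi 2 2
  have ht := congrArg Complex.re htr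
  simp [Matrix.trace, Fin.sum_univ_three] at ht
  simp only [Matrix.trace_fin_three, Fin.sum_univ_three, Matrix.mul_apply, pow_two]
  simp [hr 0 1, hr 0 2, hr 1 2, hi 0 1, hi 0 2, hi 1 2]
  have h0' : (ρ 0 0).im = 0 := by linarith
  have h2' : (ρ 2 2).im = 0 := by linarith
  rw [h0', h2']
  linear_combination 2 * ht

open ComplexOrder in
/-- The quadratic form of `ρ` at the vector `(i l, i m, n)` with real `l, m, n`. -/
lemma quadratic_form_nonneg (ρ : Matrix (Fin 3) (Fin 3) ℂ) (h : ρ.PosSemidef) (l m n : ℝ) :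
    0 ≤ l ^ 2 * (ρ 0 0).re + m ^ 2 * (ρ 1 1).re + n ^ 2 * (ρ 2 2).re
      + 2 * l * m * (ρ 0 1).re + 2 * l * n * (ρ 0 2).im + 2 * m * n * (ρ 1 2).im := by
  have hr (i j : Fin 3) : (ρ j i).re = (ρ i j).re := by
    simpa using congrArg Complex.re (h.isHermitian.apply i j)
  have hi (i j : Fin 3) : (ρ j i).im = -(ρ i j).im := by
    have := congrArg Complex.im (h.isHermitian.apply i j)
    simp at this
    linarith
  have key := h.re_dotProduct_nonneg ![l * Complex.I, m * Complex.I, n]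
  simp [Matrix.mulVec, dotProduct, Fin.sum_univ_three, hr 0 1, hr 0 2, hr 1 2,
    hi 0 1, hi 0 2, hi 1 2] at key
  linarith

lemma objective_bound {a b c y S : ℝ} (htr : a + b + c = 1)
    (hq : ∀ l m n : ℝ, 0 ≤ l ^ 2 * a + m ^ 2 * b + n ^ 2 * c + 2 * l * n * y)
    (hS : S ^ 2 ≤ (a + c + 2 * y) * b) (hy : y ^ 2 ≤ a * c) :
    15 / 32 ≤ 2 + 2 * y - (a - c) ^ 2 - 4 * S ^ 2 := by
  have hb := hq 0 1 0
  have ht := hq 1 0 1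
  have hg := hq 1 0 (-1)
  obtain ⟨t, rfl⟩ : ∃ t, y = t - (a + c) / 2 := ⟨y + (a + c) / 2, by ring⟩
  obtain ⟨g, rfl⟩ : ∃ g, c = t + g - a := ⟨c - t + a, by ring⟩
  obtain rfl : b = 1 - t - g := by linarith
  ring_nf at hb ht hg
  by_cases h : 1 / 4 ≤ t
  · nlinarith [sq_nonneg (t - 7 / 16), mul_nonneg (show 0 ≤ g by linarith) (sub_nonneg.2 h)]
  · nlinarith [sq_nonneg (t - 1 / 4), mul_nonneg hb (show 0 ≤ 1 / 4 - t by linarith)]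

open ComplexOrder in
lemma variance_sum_bound (ρ : Matrix (Fin 3) (Fin 3) ℂ) (h : ρ.PosSemidef) (htr : ρ.trace = 1) :
    15 / 32 ≤ 2 + 2 * (ρ 0 2).im - ((ρ 0 0).re - (ρ 2 2).re) ^ 2
      - 4 * ((ρ 0 1).re + (ρ 1 2).im) ^ 2 := by
  have ht := congrArg Complex.re htr
  simp [Matrix.trace, Fin.sum_univ_three] at ht
  have hq := quadratic_form_nonneg ρ h
  refine objective_bound (b := (ρ 1 1).re) (by linarith) (fun l m n => ?_) ?_ ?_
  -- Averaging over the sign of `m` removes the terms linear in `m`.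
  · linarith [hq l m n, hq l (-m) n]
  · have := discrim_le_zero (a := (ρ 1 1).re) (b := 2 * ((ρ 0 1).re + (ρ 1 2).im))
      (c := (ρ 0 0).re + (ρ 2 2).re + 2 * (ρ 0 2).im) (fun m => by linarith [hq 1 m 1])
    unfold discrim at this
    linarith
  · have := discrim_le_zero (a := (ρ 0 0).re) (b := 2 * (ρ 0 2).im)
      (c := (ρ 2 2).re) (fun l => by linarith [hq l 0 1])
    unfold discrim at this
    linarith

open ComplexOrder in
theorem stmt_19 (A B : Matrix (Fin 3) (Fin 3) ℂ)
    (hA : A = !![-1, 0, 0; 0, 0, 0; 0, 0, 1])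
    (hB : B = !![0, 1, 0; 1, 0, Complex.I; 0, -Complex.I, 0])
    (ψ : Fin 3 → ℂ)
    (hψ : ψ = ![((Real.sqrt 14 : ℝ) : ℂ) / 8 * Complex.I,
                (3 / 4 : ℂ) * Complex.I,
                ((Real.sqrt 14 : ℝ) : ℂ) / 8])
    (ρ₀ : Matrix (Fin 3) (Fin 3) ℂ)
    (hρ₀ : ρ₀ = Matrix.vecMulVec ψ (star ψ)) :
    IsLeast {x : ℝ | ∃ ρ : Matrix (Fin 3) (Fin 3) ℂ,
        ρ.PosSemidef ∧ ρ.trace = 1 ∧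
        x = (((A ^ 2 * ρ).trace - ((A * ρ).trace) ^ 2)
              + ((B ^ 2 * ρ).trace - ((B * ρ).trace) ^ 2)).re}
      (15 / 32)
    ∧ ρ₀.PosSemidef ∧ ρ₀.trace = 1
    ∧ (((A ^ 2 * ρ₀).trace - ((A * ρ₀).trace) ^ 2)
        + ((B ^ 2 * ρ₀).trace - ((B * ρ₀).trace) ^ 2)).re = 15 / 32 := by
  subst hA hB
  have hps : ρ₀.PosSemidef := hρ₀ ▸ Matrix.posSemidef_vecMulVec_self_star ψ
  have hs : Real.sqrt 14 * Real.sqrt 14 = 14 := Real.mul_self_sqrt (by norm_num)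
  have htr : ρ₀.trace = 1 := by
    subst hρ₀ hψ
    apply Complex.ext
    · simp only [Matrix.trace_fin_three, Matrix.vecMulVec_apply]
      simp
      linarith
    · simp only [Matrix.trace_fin_three, Matrix.vecMulVec_apply]
      simp
  have hval := variance_sum_eq ρ₀ hps.isHermitian htr
  have hnum : 2 + 2 * (ρ₀ 0 2).im - ((ρ₀ 0 0).re - (ρ₀ 2 2).re) ^ 2
      - 4 * ((ρ₀ 0 1).re + (ρ₀ 1 2).im) ^ 2 = 15 / 32 := by
    subst hρ₀ hψ
    simp [Matrix.vecMulVec_apply]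
    linear_combination (-7 / 64) * hs
  rw [hnum] at hval
  refine ⟨⟨⟨ρ₀, hps, htr, hval.symm⟩, ?_⟩, hps, htr, hval⟩
  rintro x ⟨ρ, h, ht, rfl⟩
  rw [variance_sum_eq ρ h.isHermitian ht]
  exact variance_sum_bound ρ h ht
end
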